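/- arXiv:2103.05415 — 3 statements merged into one kernel-verified Lean document; each statement's English description precedes it below -/
import Mathlib

section
/- Fix a prime power q and m ∈ ℕ. For each n ∈ ℕ let N_n be a set of m-dimensional F_q-subspaces of F_q^{[n]} such that: (i) N_n is stable under the actions of Sym([n]), of (F_q^*)^{[n]}, and of Aut(F_q); and (ii) for every injection π : [n'] → [n] and every C ∈ N_n, if dim(C∘π) = m then C∘π ∈ N_{n'}. Then the number of isomorphism classes of codes contained in N_n is a quasipolynomial in n for all n ≫ 0. -/
/-- A function `f : ℤ → ℚ` is a quasipolynomial if there are an integer `N ≥ 1` and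
polynomials `p i ∈ ℚ[t]` such that `f n = p (n mod N) (n)` for all `n`. -/
def IsQuasiPolynomial (f : ℤ → ℚ) : Prop :=
  ∃ N : ℕ, 0 < N ∧ ∃ p : ZMod N → Polynomial ℚ,
    ∀ n : ℤ, f n = (p (n : ZMod N)).eval (n : ℚ)

/-- A quantity `a : ℕ → ℕ` is a quasipolynomial in `n` for all `n ≫ 0`. -/
def QuasiPolynomialCount (a : ℕ → ℕ) : Prop :=
  ∃ f : ℤ → ℚ, IsQuasiPolynomial f ∧ ∃ n₀ : ℕ, ∀ n : ℕ, n₀ ≤ n → (a n : ℚ) = f n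

/-- The combined action of a coordinate permutation `π`, a scaling vector `s` and a field
automorphism `φ` on words `[n] → F`. -/
def codeMap {F : Type} [Field F] {n : ℕ}
    (π : Equiv.Perm (Fin n)) (s : Fin n → Fˣ) (φ : F ≃+* F) (v : Fin n → F) : Fin n → F :=
  fun i => φ ((s i : F) * v (π i))

open Polynomial in
/-- shift operator -/
noncomputable def shE : Module.End ℚ (ℕ → ℚ) := LinearMap.funLeft ℚ ℚ Nat.succ

theorem shE_pow (j : ℕ) (a : ℕ → ℚ) (n : ℕ) : (shE ^ j) a n = a (n + j) := by
  induction j generalizing n with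
  | zero => simp
  | succ j ih =>
    rw [pow_succ', Module.End.mul_apply]
    change (shE ^ j) a (n+1) = _
    rw [ih]; congr 1; omega

open Polynomial in
/-- eventually quasipolynomial, as annihilation -/
def EvQ (a : ℕ → ℚ) : Prop :=
  ∃ N : ℕ, 0 < N ∧ ∃ k j : ℕ, aeval shE (X ^ j * (X ^ N - 1) ^ k : ℚ[X]) a = 0

open Polynomial in
theorem EvQ_of_dvd {P Q : ℚ[X]} (h : P ∣ Q) {a : ℕ → ℚ} (ha : aeval shE P a = 0) :
    aeval shE Q a = 0 := by
  obtain ⟨R, rfl⟩ := h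
  rw [mul_comm, map_mul, Module.End.mul_apply, ha, map_zero]

open Polynomial in
theorem X_dvd_aux (N M : ℕ) : (X ^ N - 1 : ℚ[X]) ∣ X ^ (N * M) - 1 := by
  rw [pow_mul]; simpa using sub_dvd_pow_sub_pow (X ^ N : ℚ[X]) 1 M

open Polynomial in
theorem EvQ.add {a b : ℕ → ℚ} (ha : EvQ a) (hb : EvQ b) : EvQ (a + b) := by
  obtain ⟨N, hN, k, j, ha⟩ := ha
  obtain ⟨M, hM, l, i, hb⟩ := hb
  refine ⟨N * M, Nat.mul_pos hN hM, k + l, j + i, ?_⟩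
  rw [map_add, EvQ_of_dvd _ ha, EvQ_of_dvd _ hb, add_zero]
  · rw [mul_comm N M]
    exact mul_dvd_mul (pow_dvd_pow _ (by omega))
      ((pow_dvd_pow_of_dvd (X_dvd_aux M N) _).trans (pow_dvd_pow _ (by omega)))
  · exact mul_dvd_mul (pow_dvd_pow _ (by omega))
      ((pow_dvd_pow_of_dvd (X_dvd_aux N M) _).trans (pow_dvd_pow _ (by omega)))

theorem EvQ.smul {a : ℕ → ℚ} (c : ℚ) (ha : EvQ a) : EvQ (c • a) := by
  obtain ⟨N, hN, k, j, ha⟩ := ha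
  exact ⟨N, hN, k, j, by rw [map_smul, ha, smul_zero]⟩

theorem EvQ.zero : EvQ 0 := ⟨1, one_pos, 0, 0, by simp⟩

theorem EvQ.sum {ι : Type*} (s : Finset ι) (a : ι → ℕ → ℚ) (h : ∀ i ∈ s, EvQ (a i)) :
    EvQ (∑ i ∈ s, a i) := Finset.sum_induction _ EvQ (fun _ _ => EvQ.add) EvQ.zero h

open Polynomial in
theorem EvQ.shift {a : ℕ → ℚ} (i : ℕ) (ha : EvQ a) : EvQ ((shE ^ i) a) := by
  obtain ⟨N, hN, k, j, ha⟩ := ha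
  refine ⟨N, hN, k, j, ?_⟩
  have : (shE ^ i) a = aeval shE (X ^ i : ℚ[X]) a := by simp
  rw [this, ← Module.End.mul_apply, ← map_mul, mul_comm, map_mul, Module.End.mul_apply, ha, map_zero]

open Polynomial in
theorem EvQ.of_shift {a : ℕ → ℚ} (i : ℕ) (ha : EvQ ((shE ^ i) a)) : EvQ a := by
  obtain ⟨N, hN, k, j, ha⟩ := ha
  refine ⟨N, hN, k, j + i, ?_⟩
  have : (shE ^ i) a = aeval shE (X ^ i : ℚ[X]) a := by simp
  rw [this, ← Module.End.mul_apply, ← map_mul] at ha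
  convert ha using 3
  ring

open Polynomial in
theorem EvQ.of_diff {a : ℕ → ℚ} (w : ℕ) (hw : 0 < w) (ha : EvQ ((shE ^ w) a - a)) : EvQ a := by
  obtain ⟨N, hN, k, j, ha⟩ := ha
  refine ⟨w * N, Nat.mul_pos hw hN, k + 1, j, ?_⟩
  have : (shE ^ w) a - a = aeval shE (X ^ w - 1 : ℚ[X]) a := by simp
  rw [this, ← Module.End.mul_apply, ← map_mul] at ha
  refine EvQ_of_dvd ?_ ha
  rw [mul_assoc, pow_succ]
  refine mul_dvd_mul dvd_rfl (mul_dvd_mul (pow_dvd_pow_of_dvd ?_ _) (X_dvd_aux w N))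
  rw [mul_comm]; exact X_dvd_aux N w

open Polynomial in
theorem EvQ.quasi {a : ℕ → ℕ} (h : EvQ (fun n => (a n : ℚ))) : QuasiPolynomialCount a := by
  obtain ⟨N, hN, k, n0, h⟩ := h
  have : NeZero N := ⟨hN.ne'⟩
  set b : ℕ → ℚ := (shE ^ n0) (fun n => (a n : ℚ)) with hb
  have hb0 : ((shE ^ N - 1) ^ k) b = 0 := by
    rw [mul_comm] at h
    simpa using h
  have hfd : ∀ (i : ℕ) (c : ℕ → ℚ), ((shE ^ N - 1) ^ i) c = (fwdDiff N)^[i] c := by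
    intro i
    induction i with
    | zero => intro c; rfl
    | succ i ih =>
      intro c
      rw [pow_succ, Module.End.mul_apply, ih, Function.iterate_succ_apply]
      congr 1
      ext n
      simp [fwdDiff, shE_pow]
  have hz : ∀ i, k ≤ i → (fwdDiff N)^[i] b = 0 := by
    intro i hi
    rw [← hfd, ← Nat.sub_add_cancel hi, pow_add, Module.End.mul_apply, hb0, map_zero]
  let y : ZMod N → ℕ := fun r => (r - (n0 : ZMod N)).val
  let p : ZMod N → ℚ[X] := fun r => ∑ i ∈ Finset.range k,
    C ((fwdDiff N)^[i] b (y r) / (i.factorial : ℚ)) *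
      (descPochhammer ℚ i).comp (C (1 / (N:ℚ)) * (X - C ((n0 + y r : ℕ) : ℚ)))
  refine ⟨fun n => (p (n : ZMod N)).eval (n : ℚ), ⟨N, hN, p, fun n => rfl⟩, n0 + N, ?_⟩
  intro n hn
  have hy : y (n : ZMod N) = (n - n0) % N := by
    simp only [y]
    rw [← Nat.cast_sub (by omega), ZMod.val_natCast]
  obtain ⟨j, hj⟩ : ∃ j, n = n0 + y (n : ZMod N) + j * N := by
    refine ⟨(n - n0) / N, ?_⟩
    rw [hy]
    have := Nat.mod_add_div (n - n0) N
    rw [mul_comm ((n - n0) / N)]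
    omega
  have hN' : (N : ℚ) ≠ 0 := by positivity
  have hcast : ((n : ℤ) : ZMod N) = (n : ZMod N) := by simp
  simp only [hcast]
  generalize hyy : y (n : ZMod N) = y0 at *
  have e1 : (a n : ℚ) = b (y0 + j • N) := by
    rw [hb, shE_pow]; simp only [smul_eq_mul]; congr 2; omega
  have e2 : 1 / (N:ℚ) * ((n : ℚ) - ((n0 + y0 : ℕ) : ℚ)) = j := by
    conv_lhs => rw [hj]
    push_cast
    field_simp
    ring
  rw [e1, shift_eq_sum_fwdDiff_iter N b j y0]
  simp only [p, hyy, eval_finsetSum, eval_mul, eval_C, eval_comp, eval_sub, eval_X, Int.cast_natCast,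
    e2]
  have e3 : ∀ i, (fwdDiff N)^[i] b y0 / (i.factorial : ℚ) * (descPochhammer ℚ i).eval (j : ℚ)
      = j.choose i • (fwdDiff N)^[i] b y0 := by
    intro i
    rw [descPochhammer_eval_eq_descFactorial, nsmul_eq_mul, Nat.descFactorial_eq_factorial_mul_choose]
    have : (i.factorial : ℚ) ≠ 0 := by positivity
    push_cast
    field_simp
  simp only [e3]
  have e4 : ∀ K L, K ≤ L → (∀ i, K ≤ i → j.choose i • (fwdDiff N)^[i] b y0 = 0) →
    ∑ i ∈ Finset.range K, j.choose i • (fwdDiff N)^[i] b y0 =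
    ∑ i ∈ Finset.range L, j.choose i • (fwdDiff N)^[i] b y0 := by
    intro K L hKL h
    apply Finset.sum_subset (Finset.range_mono hKL)
    intro i _ hi
    exact h i (by simpa using hi)
  rw [e4 (j+1) (max (j+1) k) (le_max_left _ _), e4 k (max (j+1) k) (le_max_right _ _)]
  · intro i hi; rw [hz i hi]; simp
  · intro i hi; rw [Nat.choose_eq_zero_of_lt (by omega)]; simp

theorem wf_lowerSet (α : Type*) [Preorder α] [WellQuasiOrderedLE α] :
    WellFounded ((· < ·) : LowerSet α → LowerSet α → Prop) := by
  rw [RelEmbedding.wellFounded_iff_isEmpty]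
  refine ⟨fun f => ?_⟩
  have hlt : ∀ n m, n < m → f m < f n := fun n m h => f.map_rel_iff.2 h
  have hex : ∀ n, ∃ x, x ∈ f n ∧ x ∉ f (n+1) := by
    intro n
    exact Set.exists_of_ssubset (LowerSet.coe_ssubset_coe.2 (hlt n (n+1) (by omega)))
  choose x hx hx' using hex
  obtain ⟨i, j, hij, hle⟩ := wellQuasiOrdered_le x
  apply hx' i
  have : f j ≤ f (i+1) := by
    rcases (show i + 1 = j ∨ i + 1 < j by omega) with h | h
    · rw [h]
    · exact (hlt _ _ h).le
  exact this ((f j).lower hle (hx j))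

/-- weighted level set -/
def lvl {k : ℕ} (w : Fin k → ℕ) (D : Set (Fin k → ℕ)) (n : ℕ) : Set (Fin k → ℕ) :=
  {μ | μ ∈ D ∧ ∑ i, w i * μ i = n}

theorem lvl_finite {k : ℕ} (w : Fin k → ℕ) (hw : ∀ i, 0 < w i) (D : Set (Fin k → ℕ)) (n : ℕ) :
    (lvl w D n).Finite := by
  apply (Set.finite_Iic (fun _ : Fin k => n)).subset
  rintro μ ⟨_, h⟩ i
  have h1 : w i * μ i ≤ ∑ i, w i * μ i :=
    Finset.single_le_sum (f := fun i => w i * μ i) (fun _ _ => Nat.zero_le _) (Finset.mem_univ i)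
  have := Nat.le_mul_of_pos_left (μ i) (hw i)
  change μ i ≤ n
  omega

theorem lvl_rec {k : ℕ} (w : Fin (k+1) → ℕ) (hw : ∀ i, 0 < w i) (D : Set (Fin (k+1) → ℕ)) (n : ℕ) :
    (lvl w D (n + w 0)).ncard =
      (lvl (fun i => w i.succ) {μ | (Fin.cons 0 μ : Fin (k+1) → ℕ) ∈ D} (n + w 0)).ncard
      + (lvl w {μ | μ + Pi.single 0 1 ∈ D} n).ncard := by
  have hinj1 : Function.Injective (fun μ : Fin k → ℕ => (Fin.cons 0 μ : Fin (k+1) → ℕ)) :=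
    Fin.cons_right_injective (α := fun _ => ℕ) 0
  have hinj2 : Function.Injective (fun μ : Fin (k+1) → ℕ => μ + Pi.single 0 1) :=
    add_left_injective _
  rw [← Set.ncard_image_of_injective _ hinj1,
    ← Set.ncard_image_of_injective (lvl w _ n) hinj2,
    ← Set.ncard_union_eq ?_ ((lvl_finite _ (fun i => hw _) _ _).image _)
      ((lvl_finite _ hw _ _).image _)]
  · congr 1
    ext μ
    constructor
    · rintro ⟨h1, h2⟩
      rcases Nat.eq_zero_or_pos (μ 0) with h0 | h0
      · left
        have e : (Fin.cons 0 (Fin.tail μ) : Fin (k+1) → ℕ) = μ := by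
          conv_rhs => rw [← Fin.cons_self_tail μ, h0]
        refine ⟨Fin.tail μ, ⟨?_, ?_⟩, e⟩
        · change Fin.cons 0 (Fin.tail μ) ∈ D
          rwa [e]
        · rw [Fin.sum_univ_succ, h0] at h2
          simpa [Fin.tail] using h2
      · right
        have e : μ - Pi.single 0 1 + Pi.single 0 1 = μ := by
          apply tsub_add_cancel_of_le
          intro i
          refine Fin.cases ?_ (fun i => ?_) i
          · simp only [Pi.single_eq_same]; exact h0
          · simp
        refine ⟨μ - Pi.single 0 1, ⟨?_, ?_⟩, e⟩
        · change _ + _ ∈ D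
          rwa [e]
        · rw [Fin.sum_univ_succ] at h2 ⊢
          simp only [Pi.sub_apply, Pi.single_eq_same, ne_eq, Fin.succ_ne_zero, not_false_eq_true,
            Pi.single_eq_of_ne, tsub_zero]
          obtain ⟨c, hc⟩ : ∃ c, μ 0 = c + 1 := ⟨μ 0 - 1, by omega⟩
          rw [hc] at h2 ⊢
          simp only [Nat.add_sub_cancel]
          rw [mul_add] at h2
          omega
    · rintro (⟨ν, ⟨h1, h2⟩, rfl⟩ | ⟨ν, ⟨h1, h2⟩, rfl⟩)
      · refine ⟨h1, ?_⟩
        rw [Fin.sum_univ_succ]; simpa using h2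
      · refine ⟨h1, ?_⟩
        rw [← h2]
        simp [mul_add, Finset.sum_add_distrib, Pi.single_apply]
  · rw [Set.disjoint_left]
    rintro _ ⟨ν, _, rfl⟩ ⟨ν', _, h⟩
    have := congrFun h 0
    simp at this

theorem lvl_evQ {k : ℕ} (w : Fin k → ℕ) (hw : ∀ i, 0 < w i) (D : LowerSet (Fin k → ℕ)) :
    EvQ (fun n => ((lvl w D n).ncard : ℚ)) := by
  induction k with
  | zero =>
    refine EvQ.of_shift 1 ?_
    convert EvQ.zero
    ext n
    rw [shE_pow]
    have : lvl w D (n+1) = ∅ := by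
      ext μ; simp [lvl]
    simp [this]
  | succ k ih =>
    induction D using (wf_lowerSet (Fin (k+1) → ℕ)).induction with
    | _ D IH =>
    let D0 : LowerSet (Fin k → ℕ) := ⟨{μ | (Fin.cons 0 μ : Fin (k+1) → ℕ) ∈ D}, by
      intro a b hab ha
      refine D.lower ?_ ha
      intro i
      refine Fin.cases ?_ (fun i => ?_) i
      · simp
      · simpa using hab i⟩
    let D1 : LowerSet (Fin (k+1) → ℕ) := ⟨{μ | μ + Pi.single 0 1 ∈ D}, by
      intro a b hab ha
      exact D.lower (add_le_add_left hab _) ha⟩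
    have hrec : (shE ^ (w 0)) (fun n => ((lvl w D n).ncard : ℚ)) =
        (shE ^ (w 0)) (fun n => ((lvl (fun i => w i.succ) D0 n).ncard : ℚ)) +
          (fun n => ((lvl w D1 n).ncard : ℚ)) := by
      ext n
      rw [Pi.add_apply, shE_pow, shE_pow, lvl_rec w hw]
      push_cast
      rfl
    have h0 := (ih (fun i => w i.succ) (fun i => hw _) D0).shift (w 0)
    have hle : D1 ≤ D := fun μ hμ => D.lower (le_add_of_nonneg_right (by
      intro i; exact Nat.zero_le _)) hμ
    by_cases heq : D1 = D
    · refine EvQ.of_diff (w 0) (hw 0) ?_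
      rw [hrec, heq, add_sub_cancel_right]
      exact h0
    · refine EvQ.of_shift (w 0) ?_
      rw [hrec]
      exact h0.add (IH D1 (lt_of_le_of_ne hle heq))

/-- fixed points in a level -/
def fixLvl {X : Type*} [Fintype X] (σ : Equiv.Perm X) (T : Set (X → ℕ)) (n : ℕ) : Set (X → ℕ) :=
  {μ | μ ∈ T ∧ (∀ x, μ (σ x) = μ x) ∧ ∑ x, μ x = n}

theorem fixLvl_finite {X : Type*} [Fintype X] (σ : Equiv.Perm X) (T : Set (X → ℕ)) (n : ℕ) :
    (fixLvl σ T n).Finite := by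
  classical
  apply (Set.finite_Iic (fun _ : X => n)).subset
  rintro μ ⟨_, _, h⟩ i
  rw [← h]
  exact Finset.single_le_sum (f := μ) (fun _ _ => Nat.zero_le _) (Finset.mem_univ i)

theorem fix_evQ {X : Type*} [Fintype X] (σ : Equiv.Perm X) (T : LowerSet (X → ℕ)) :
    EvQ (fun n => ((fixLvl σ T n).ncard : ℚ)) := by
  classical
  let Y := Quotient (Equiv.Perm.SameCycle.setoid σ)
  let k := Fintype.card Y
  let e : Y ≃ Fin k := Fintype.equivFin Y
  let q : X → Fin k := fun x => e (Quotient.mk _ x)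
  have hq : Function.Surjective q := e.surjective.comp Quotient.mk_surjective
  let w : Fin k → ℕ := fun i => (Finset.univ.filter (fun x => q x = i)).card
  have hw : ∀ i, 0 < w i := by
    intro i
    obtain ⟨x, hx⟩ := hq i
    exact Finset.card_pos.2 ⟨x, by simp [hx]⟩
  let D : LowerSet (Fin k → ℕ) := ⟨{ν | ν ∘ q ∈ T}, by
    intro a b hab ha
    exact T.lower (fun x => hab (q x)) ha⟩
  convert lvl_evQ w hw D using 3 with n
  have hinj : Function.Injective (fun ν : Fin k → ℕ => ν ∘ q) := hq.injective_comp_right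
  rw [← Set.ncard_image_of_injective _ hinj]
  have hsum : ∀ ν : Fin k → ℕ, ∑ x, (ν ∘ q) x = ∑ i, w i * ν i := by
    intro ν
    rw [← Finset.sum_fiberwise_of_maps_to (g := q) (t := Finset.univ) (fun _ _ => Finset.mem_univ _)]
    refine Finset.sum_congr rfl fun i _ => ?_
    rw [Finset.sum_congr rfl (g := fun _ => ν i)]
    · simp [w]
    · intro x hx
      simp at hx
      simp [hx]
  congr 1
  ext μ
  constructor
  · rintro ⟨h1, h2, h3⟩
    have hpow : ∀ (i : ℤ) x, μ ((σ ^ i) x) = μ x := by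
      intro i
      induction i using Int.induction_on with
      | zero => simp
      | succ i ih => intro x; rw [zpow_add, zpow_one, Equiv.Perm.mul_apply, ih, h2]
      | pred i ih =>
        intro x
        rw [zpow_sub, zpow_one, Equiv.Perm.mul_apply, ih, ← h2]
        simp
    let ν : Fin k → ℕ := fun i => Quotient.lift μ (fun a b h => by
      obtain ⟨i, rfl⟩ := h
      exact (hpow i a).symm) (e.symm i)
    have hν : ν ∘ q = μ := by
      ext x
      simp [ν, q]
    refine ⟨ν, ⟨?_, ?_⟩, hν⟩
    · change ν ∘ q ∈ T
      rw [hν]; exact h1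
    · rw [← hsum, hν, h3]
  · rintro ⟨ν, ⟨h1, h2⟩, rfl⟩
    refine ⟨h1, ?_, ?_⟩
    · intro x
      have : q (σ x) = q x := by
        simp only [q]
        congr 1
        apply Quotient.sound
        change Equiv.Perm.SameCycle σ _ _
        simp [Equiv.Perm.SameCycle.refl]
      simp [this]
    · change ∑ x, (ν ∘ q) x = n
      rw [hsum, h2]

theorem orbits_evQ {X : Type*} [Fintype X] (H : Subgroup (Equiv.Perm X)) (S : Set (X → ℕ))
    (T U : LowerSet (X → ℕ)) (hUT : U ≤ T) (hS : S = (T : Set (X → ℕ)) \ U)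
    (hst : ∀ σ ∈ H, ∀ μ ∈ S, μ ∘ σ ∈ S) :
    EvQ (fun n => (Nat.card (Quot (fun μ ν : {μ : X → ℕ // μ ∈ S ∧ ∑ x, μ x = n} =>
      ∃ σ ∈ H, ν.1 = μ.1 ∘ σ)) : ℚ)) := by
  classical
  have key : ∀ n, (Nat.card (Quot (fun μ ν : {μ : X → ℕ // μ ∈ S ∧ ∑ x, μ x = n} =>
      ∃ σ ∈ H, ν.1 = μ.1 ∘ σ)) : ℚ) = (1 / (Fintype.card H : ℚ)) *
      ∑ σ : H, (((fixLvl σ.1 T n).ncard : ℚ) + (-1) * ((fixLvl σ.1 U n).ncard : ℚ)) := by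
    intro n
    let Z := {μ : X → ℕ // μ ∈ S ∧ ∑ x, μ x = n}
    let act : MulAction H Z :=
      { smul := fun σ μ => ⟨μ.1 ∘ (σ⁻¹ : H).1, hst _ (σ⁻¹).2 _ μ.2.1, 
          (Equiv.sum_comp (σ⁻¹ : H).1 μ.1).trans μ.2.2⟩
        one_smul := fun μ => by
          apply Subtype.ext
          change μ.1 ∘ ((1 : H)⁻¹ : H).1 = _
          simp
        mul_smul := fun σ τ μ => by
          apply Subtype.ext
          change μ.1 ∘ ((σ * τ)⁻¹ : H).1 = (μ.1 ∘ (τ⁻¹ : H).1) ∘ (σ⁻¹ : H).1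
          rw [mul_inv_rev]
          rfl }
    have hsm : ∀ (σ : H) (μ : Z), (σ • μ).1 = μ.1 ∘ (σ⁻¹ : H).1 := fun _ _ => rfl
    have hZfin : Finite Z := by
      have hsub : {μ : X → ℕ | μ ∈ S ∧ ∑ x, μ x = n} ⊆ fixLvl (1 : Equiv.Perm X) S n :=
        fun μ hμ => ⟨hμ.1, fun _ => rfl, hμ.2⟩
      exact ((fixLvl_finite (1 : Equiv.Perm X) S n).subset hsub).to_subtype
    have : Fintype Z := Fintype.ofFinite Z
    have : Fintype (MulAction.orbitRel.Quotient H Z) := Fintype.ofFinite _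
    have hB := MulAction.sum_card_fixedBy_eq_card_orbits_mul_card_group H Z
    have hq : Nat.card (Quot (fun μ ν : Z => ∃ σ ∈ H, ν.1 = μ.1 ∘ σ)) =
        Fintype.card (MulAction.orbitRel.Quotient H Z) := by
      rw [← Nat.card_eq_fintype_card]
      apply Nat.card_congr
      refine Quot.congrRight ?_
      intro μ ν
      constructor
      · rintro ⟨σ, hσ, h⟩
        change μ ∈ MulAction.orbit H ν
        refine ⟨⟨σ, hσ⟩, ?_⟩
        apply Subtype.ext
        change ν.1 ∘ (σ⁻¹ : Equiv.Perm X) = μ.1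
        rw [h]; ext x; simp
      · intro h
        obtain ⟨σ, h⟩ : μ ∈ MulAction.orbit H ν := h
        refine ⟨σ.1, σ.2, ?_⟩
        rw [← h]
        change _ = (ν.1 ∘ (σ.1⁻¹ : Equiv.Perm X)) ∘ _
        ext x; simp
    have hfix : ∀ σ : H, (Fintype.card (MulAction.fixedBy Z σ) : ℚ) =
        ((fixLvl σ.1 T n).ncard : ℚ) + (-1) * ((fixLvl σ.1 U n).ncard : ℚ) := by
      intro σ
      have hsub : fixLvl σ.1 U n ⊆ fixLvl σ.1 T n := fun μ h => ⟨hUT h.1, h.2⟩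
      have h1 := Set.ncard_sdiff_add_ncard_of_subset hsub (fixLvl_finite _ _ _)
      have h2 : Fintype.card (MulAction.fixedBy Z σ) =
          (fixLvl σ.1 T n \ fixLvl σ.1 U n).ncard := by
        rw [← Nat.card_eq_fintype_card, Nat.card_coe_set_eq,
          ← Set.ncard_image_of_injective _ Subtype.val_injective]
        congr 1
        ext μ
        constructor
        · rintro ⟨ν, hν, rfl⟩
          have hν' : ν.1 ∘ (σ.1⁻¹ : Equiv.Perm X) = ν.1 := congrArg Subtype.val hν
          have hm : ν.1 ∈ (T : Set (X → ℕ)) \ U := hS.subset ν.2.1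
          refine ⟨⟨hm.1, ?_, ν.2.2⟩, fun h => hm.2 h.1⟩
          intro x
          conv_lhs => rw [← hν']
          simp
        · rintro ⟨⟨h1, h2, h3⟩, h4⟩
          refine ⟨⟨μ, ?_, h3⟩, ?_, rfl⟩
          · rw [hS]; exact ⟨h1, fun h => h4 ⟨h, h2, h3⟩⟩
          · apply Subtype.ext
            change μ ∘ (σ.1⁻¹ : Equiv.Perm X) = μ
            ext x
            rw [Function.comp, ← h2]; simp
      rw [h2, ← h1]
      push_cast
      ring
    change (Nat.card (Quot (fun μ ν : Z => ∃ σ ∈ H, ν.1 = μ.1 ∘ σ)) : ℚ) = _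
    rw [hq, ← Finset.sum_congr rfl (fun σ _ => hfix σ), ← Nat.cast_sum, hB]
    have : (Fintype.card H : ℚ) ≠ 0 := by
      exact_mod_cast Fintype.card_ne_zero
    push_cast
    field_simp
  have := (EvQ.sum Finset.univ (fun (σ : H) => (fun n => ((fixLvl σ.1 T n).ncard : ℚ)) +
      (-1 : ℚ) • (fun n => ((fixLvl σ.1 U n).ncard : ℚ)))
      (fun σ _ => (fix_evQ σ.1 T).add ((fix_evQ σ.1 U).smul (-1)))).smul (1 / (Fintype.card H : ℚ))
  convert this using 1
  ext n
  rw [key]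
  simp [Finset.sum_apply]

section fibers
variable {X ι : Type*}

/-- fiber multiplicities -/
noncomputable def cm (f : ι → X) : X → ℕ := fun p => Nat.card {i // f i = p}

theorem cm_sum [Fintype X] [Finite ι] (f : ι → X) : ∑ p, cm f p = Nat.card ι := by
  rw [← Nat.card_congr (Equiv.sigmaFiberEquiv f), Nat.card_sigma]
  rfl

theorem cm_perm (f : ι → X) (π : Equiv.Perm ι) : cm (fun i => f (π i)) = cm f := by
  ext p
  exact Nat.card_congr (π.subtypeEquiv (fun i => Iff.rfl))

theorem cm_comp (f : ι → X) (σ : Equiv.Perm X) : cm (fun i => σ (f i)) = cm f ∘ (σ⁻¹ : Equiv.Perm X) := by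
  ext p
  refine Nat.card_congr (Equiv.subtypeEquivRight fun i => ?_)
  constructor
  · intro h; rw [← h]; simp
  · intro h; change σ (f i) = p; rw [h]; simp

theorem cm_eq [Finite ι] {f g : ι → X} (h : cm g = cm f) : ∃ π : Equiv.Perm ι, ∀ i, g i = f (π i) := by
  have hE : ∀ p, Nonempty ({i // g i = p} ≃ {i // f i = p}) := fun p =>
    Finite.card_eq.1 (congrFun h p)
  exact ⟨Equiv.ofFiberEquiv fun p => (hE p).some, fun i => (Equiv.ofFiberEquiv_map _ i).symm⟩

theorem cm_ne_zero [Finite ι] (f : ι → X) (p : X) : cm f p ≠ 0 ↔ ∃ i, f i = p := by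
  rw [cm, ← Nat.pos_iff_ne_zero, Nat.card_pos_iff]
  simp only [nonempty_subtype]
  exact ⟨fun h => h.1, fun h => ⟨h, inferInstance⟩⟩

theorem cm_sub {n : ℕ} (f : Fin n → X) (μ : X → ℕ) (h : μ ≤ cm f) :
    ∃ (n' : ℕ) (π : Fin n' → Fin n), Function.Injective π ∧ cm (fun j => f (π j)) = μ := by
  classical
  have h1 : ∀ p, ∃ A ⊆ Finset.univ.filter (fun i => f i = p), A.card = μ p := by
    intro p
    apply Finset.exists_subset_card_eq
    have := h p
    rwa [cm, Nat.card_eq_fintype_card, Fintype.card_subtype] at this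
  choose A hA hc using h1
  have hA' : ∀ p i, i ∈ A p → f i = p := fun p i hi => by simpa using hA p hi
  let B : Finset (Fin n) := Finset.univ.filter (fun i => i ∈ A (f i))
  refine ⟨B.card, fun j => (B.equivFin.symm j : Fin n), ?_, ?_⟩
  · exact Subtype.val_injective.comp B.equivFin.symm.injective
  · ext p
    have hAc : (A p).card = Nat.card (A p : Set (Fin n)) := by simp
    rw [← hc p, cm, hAc]
    refine Nat.card_congr ?_
    refine (B.equivFin.symm.subtypeEquiv (q := fun b : B => f b.1 = p) (fun j => Iff.rfl)).trans ?_
    refine Equiv.ofBijective (fun b => (⟨b.1.1, ?_⟩ : (A p : Set (Fin n)))) ⟨?_, ?_⟩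
    · have := b.1.2
      simp only [B, Finset.mem_filter, Finset.mem_univ, true_and] at this
      rw [b.2] at this
      exact this
    · rintro ⟨⟨a, _⟩, _⟩ ⟨⟨b, _⟩, _⟩ h
      simpa using h
    · rintro ⟨a, ha⟩
      have hf := hA' p a ha
      exact ⟨⟨⟨a, by simp only [B, Finset.mem_filter, Finset.mem_univ, true_and, hf]; exact ha⟩, hf⟩, rfl⟩

end fibers

section codes
variable {F : Type} [Field F] {m : ℕ}

/-- scaling equivalence -/
def projS (F : Type) [Field F] (m : ℕ) : Setoid (Fin m → F) where
  r a b := ∃ u : Fˣ, b = (u : F) • a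
  iseqv := ⟨fun a => ⟨1, by simp⟩, by
    rintro a _ ⟨u, rfl⟩
    exact ⟨u⁻¹, by simp [smul_smul]⟩, by
    rintro a _ _ ⟨u, rfl⟩ ⟨v, rfl⟩
    exact ⟨v * u, by simp [smul_smul]⟩⟩

/-- points -/
abbrev PX (F : Type) [Field F] (m : ℕ) := Quotient (projS F m)

/-- class of a vector -/
def pt (v : Fin m → F) : PX F m := Quotient.mk _ v

theorem pt_eq {v w : Fin m → F} : pt v = pt w ↔ ∃ u : Fˣ, w = (u : F) • v := Quotient.eq (r := projS F m)

/-- semilinear with adjoint -/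
def Semil (γ : Equiv.Perm (Fin m → F)) (φ : F ≃+* F) : Prop :=
  (∀ a, ∃ b, ∀ v, γ v ⬝ᵥ a = φ (v ⬝ᵥ b)) ∧ (∀ b, ∃ a, ∀ v, γ v ⬝ᵥ a = φ (v ⬝ᵥ b))

theorem Semil.smul {γ : Equiv.Perm (Fin m → F)} {φ : F ≃+* F} (h : Semil γ φ) (c : F) (v : Fin m → F) :
    γ (c • v) = φ c • γ v := by
  apply dotProduct_eq
  intro a
  obtain ⟨b, hb⟩ := h.1 a
  rw [hb, smul_dotProduct, smul_dotProduct, hb]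
  simp

theorem Semil.one : Semil (1 : Equiv.Perm (Fin m → F)) (RingEquiv.refl F) :=
  ⟨fun a => ⟨a, fun _ => rfl⟩, fun a => ⟨a, fun _ => rfl⟩⟩

theorem Semil.mul {γ δ : Equiv.Perm (Fin m → F)} {φ ψ : F ≃+* F} (h : Semil γ φ) (k : Semil δ ψ) :
    Semil (γ * δ) (ψ.trans φ) := by
  constructor
  · intro a
    obtain ⟨b, hb⟩ := h.1 a
    obtain ⟨c, hc⟩ := k.1 b
    exact ⟨c, fun v => by simp [hb, hc]⟩
  · intro a
    obtain ⟨b, hb⟩ := k.2 a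
    obtain ⟨c, hc⟩ := h.2 b
    exact ⟨c, fun v => by simp [hb, hc]⟩

theorem Semil.inv {γ : Equiv.Perm (Fin m → F)} {φ : F ≃+* F} (h : Semil γ φ) :
    Semil γ⁻¹ φ.symm := by
  constructor
  · intro a
    obtain ⟨b, hb⟩ := h.2 a
    refine ⟨b, fun v => ?_⟩
    have := hb (γ⁻¹ v)
    rw [RingEquiv.eq_symm_apply, ← this]; simp
  · intro a
    obtain ⟨b, hb⟩ := h.1 a
    refine ⟨b, fun v => ?_⟩
    have := hb (γ⁻¹ v)
    rw [RingEquiv.eq_symm_apply, ← this]; simp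

/-- The image of the semilinear group on points -/
def HG (F : Type) [Field F] (m : ℕ) : Subgroup (Equiv.Perm (PX F m)) where
  carrier := {σ | ∃ γ φ, Semil γ φ ∧ ∀ v, σ (pt v) = pt (γ v)}
  one_mem' := ⟨1, _, Semil.one, fun _ => rfl⟩
  mul_mem' := by
    rintro σ τ ⟨γ, φ, h, h'⟩ ⟨δ, ψ, k, k'⟩
    exact ⟨γ * δ, _, h.mul k, fun v => by simp [h', k']⟩
  inv_mem' := by
    rintro σ ⟨γ, φ, h, h'⟩
    refine ⟨γ⁻¹, _, h.inv, fun v => ?_⟩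
    rw [Equiv.Perm.inv_eq_iff_eq, h']; simp

theorem Semil.exists_perm {γ : Equiv.Perm (Fin m → F)} {φ : F ≃+* F} (h : Semil γ φ) :
    ∃ σ ∈ HG F m, ∀ v, σ (pt v) = pt (γ v) := by
  let σ : Equiv.Perm (PX F m) := Quotient.congr γ (by
    intro a b
    constructor
    · rintro ⟨u, rfl⟩
      exact ⟨Units.map φ u, by rw [h.smul]; rfl⟩
    · rintro ⟨u, hu⟩
      refine ⟨Units.map φ.symm u, γ.injective ?_⟩
      rw [h.smul, hu]; simp)
  have hσ : ∀ v, σ (pt v) = pt (γ v) := fun v => rfl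
  exact ⟨σ, ⟨γ, φ, h, hσ⟩, hσ⟩

/-- code with given columns -/
def codeOf {n : ℕ} (x : Fin n → Fin m → F) : Submodule F (Fin n → F) :=
  LinearMap.range (Matrix.mulVecLin (Matrix.of x))

theorem mem_codeOf {n : ℕ} (x : Fin n → Fin m → F) (v : Fin n → F) :
    v ∈ codeOf x ↔ ∃ a, (fun i => x i ⬝ᵥ a) = v := Iff.rfl

theorem Semil.code {n : ℕ} {γ : Equiv.Perm (Fin m → F)} {φ : F ≃+* F} (h : Semil γ φ)
    (π : Equiv.Perm (Fin n)) (s : Fin n → Fˣ) (x y : Fin n → Fin m → F)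
    (hy : ∀ i, y i = γ ((s i : F) • x (π i))) :
    codeMap π s φ '' (codeOf x : Set (Fin n → F)) = codeOf y := by
  have key : ∀ a b, (∀ v, γ v ⬝ᵥ a = φ (v ⬝ᵥ b)) →
      codeMap π s φ (fun i => x i ⬝ᵥ b) = fun i => y i ⬝ᵥ a := by
    intro a b hab
    ext i
    rw [hy, hab, smul_dotProduct]
    rfl
  ext v
  constructor
  · rintro ⟨_, ⟨b, rfl⟩, rfl⟩
    obtain ⟨a, ha⟩ := h.2 b
    exact ⟨a, (key a b ha).symm⟩
  · rintro ⟨a, rfl⟩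
    obtain ⟨b, hb⟩ := h.1 a
    exact ⟨_, ⟨b, rfl⟩, key a b hb⟩

/-- columns span -/
def Spn {n : ℕ} (x : Fin n → Fin m → F) : Prop := ∀ a, (∀ i, x i ⬝ᵥ a = 0) → a = 0

theorem Spn.inj {n : ℕ} {x : Fin n → Fin m → F} (h : Spn x) :
    Function.Injective (Matrix.mulVecLin (Matrix.of x)) := by
  rw [injective_iff_map_eq_zero]
  intro a ha
  exact h a (fun i => congrFun ha i)

theorem Spn_iff {n : ℕ} {x : Fin n → Fin m → F} : Spn x ↔ Module.finrank F (codeOf x) = m := by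
  constructor
  · intro h
    rw [codeOf, LinearMap.finrank_range_of_inj h.inj]; simp
  · intro h a ha
    have h2 := LinearMap.finrank_range_add_finrank_ker (Matrix.mulVecLin (Matrix.of x))
    rw [codeOf] at h
    rw [h] at h2
    simp only [Module.finrank_fin_fun, Nat.add_eq_left] at h2
    have h3 := Submodule.finrank_eq_zero.1 h2
    have : a ∈ LinearMap.ker (Matrix.mulVecLin (Matrix.of x)) := by
      rw [LinearMap.mem_ker]; ext i; exact ha i
    rw [h3] at this
    simpa using this

theorem exists_cols {n : ℕ} (C : Submodule F (Fin n → F)) (h : Module.finrank F C = m) :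
    ∃ x : Fin n → Fin m → F, codeOf x = C := by
  let e : (Fin m → F) ≃ₗ[F] C := LinearEquiv.ofFinrankEq _ _ (by simp [h])
  let L : (Fin m → F) →ₗ[F] (Fin n → F) := C.subtype ∘ₗ e.toLinearMap
  refine ⟨LinearMap.toMatrix' L, ?_⟩
  have : Matrix.mulVecLin (Matrix.of (LinearMap.toMatrix' L)) = L := Matrix.toLin'_toMatrix' L
  change LinearMap.range _ = C
  rw [this, LinearMap.range_comp]
  simp

/-- coordinatewise automorphism -/
def autP (φ : F ≃+* F) (m : ℕ) : Equiv.Perm (Fin m → F) := Equiv.piCongrRight fun _ => φ.toEquiv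

theorem autP_dot (φ : F ≃+* F) (a b : Fin m → F) : autP φ m a ⬝ᵥ autP φ m b = φ (a ⬝ᵥ b) := by
  simp [autP, dotProduct, map_sum]

theorem autP_semil (φ : F ≃+* F) : Semil (autP φ m) φ :=
  ⟨fun a => ⟨(autP φ m).symm a, fun v => by rw [← autP_dot]; simp⟩,
    fun a => ⟨autP φ m a, fun v => by rw [← autP_dot]⟩⟩

theorem lin_of_code_eq {n : ℕ} {y z : Fin n → Fin m → F} (hy : Spn y) (hz : Spn z)
    (h : codeOf z = codeOf y) : ∃ γ : Equiv.Perm (Fin m → F), Semil γ (RingEquiv.refl F) ∧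
      ∀ i, y i = γ (z i) := by
  let e : (Fin m → F) ≃ₗ[F] (Fin m → F) := (LinearEquiv.ofInjective _ hz.inj).trans
    ((LinearEquiv.ofEq _ _ h).trans (LinearEquiv.ofInjective _ hy.inj).symm)
  have he : ∀ b i, y i ⬝ᵥ e b = z i ⬝ᵥ b := by
    intro b i
    have h1 : LinearEquiv.ofInjective _ hy.inj (e b) =
      LinearEquiv.ofEq _ _ h (LinearEquiv.ofInjective _ hz.inj b) := LinearEquiv.apply_symm_apply _ _
    exact congrFun (congrArg Subtype.val h1) i
  let M := LinearMap.toMatrix' e.toLinearMap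
  let M' := LinearMap.toMatrix' e.symm.toLinearMap
  have hM : ∀ b, M.mulVec b = e b := fun b => LinearMap.toMatrix'_mulVec _ b
  have hM' : ∀ b, M'.mulVec b = e.symm b := fun b => LinearMap.toMatrix'_mulVec _ b
  let γ : Equiv.Perm (Fin m → F) :=
    { toFun := fun v => Matrix.vecMul v M'
      invFun := fun v => Matrix.vecMul v M
      left_inv := fun v => by
        apply dotProduct_eq
        intro a
        rw [← Matrix.dotProduct_mulVec, ← Matrix.dotProduct_mulVec, hM, hM']; simp
      right_inv := fun v => by
        apply dotProduct_eq
        intro a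
        rw [← Matrix.dotProduct_mulVec, ← Matrix.dotProduct_mulVec, hM, hM']; simp }
  have hγ : ∀ v a, γ v ⬝ᵥ a = v ⬝ᵥ e.symm a := by
    intro v a
    rw [← hM', Matrix.dotProduct_mulVec]; rfl
  refine ⟨γ, ⟨fun a => ⟨e.symm a, fun v => hγ v a⟩, fun b => ⟨e b, fun v => ?_⟩⟩, fun i => ?_⟩
  · rw [hγ]; simp
  · apply dotProduct_eq
    intro a
    rw [hγ, ← he]; simp

theorem iso_iff {n : ℕ} {x y : Fin n → Fin m → F} (hx : Spn x) (hy : Spn y) :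
    (∃ (π : Equiv.Perm (Fin n)) (s : Fin n → Fˣ) (φ : F ≃+* F),
      codeMap π s φ '' (codeOf x : Set (Fin n → F)) = codeOf y) ↔
    ∃ σ ∈ HG F m, cm (fun i => pt (y i)) = cm (fun i => pt (x i)) ∘ σ := by
  constructor
  · rintro ⟨π, s, φ, h⟩
    let z : Fin n → Fin m → F := fun i => autP φ m ((s i : F) • x (π i))
    have hz := (autP_semil (m := m) φ).code π s x z (fun i => rfl)
    have hzy : codeOf z = codeOf y := SetLike.coe_injective (hz.symm.trans h)
    have hzs : Spn z := by rw [Spn_iff, hzy, ← Spn_iff]; exact hy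
    obtain ⟨γ, hγ, hγ'⟩ := lin_of_code_eq hy hzs hzy
    obtain ⟨σ, hσ, hσ'⟩ := (hγ.mul (autP_semil φ)).exists_perm
    refine ⟨σ⁻¹, (HG F m).inv_mem hσ, ?_⟩
    rw [← cm_comp, ← cm_perm (fun i => σ (pt (x i))) π]
    congr 1
    ext i
    rw [hγ']
    have : pt (x (π i)) = pt ((s i : F) • x (π i)) := pt_eq.2 ⟨s i, rfl⟩
    rw [this, hσ']
    rfl
  · rintro ⟨σ, hσ, h⟩
    obtain ⟨γ, φ, hγ, hγ'⟩ := (HG F m).inv_mem hσ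
    have h' : cm (fun i => pt (y i)) = cm (fun i => σ⁻¹ (pt (x i))) := by
      rw [cm_comp, h, inv_inv]
    obtain ⟨π, hπ⟩ := cm_eq h'
    have hu : ∀ i, ∃ u : Fˣ, y i = (u : F) • γ (x (π i)) := by
      intro i
      rw [← pt_eq, hπ, hγ']
    choose u hu using hu
    refine ⟨π, fun i => Units.map φ.symm (u i), φ, ?_⟩
    apply hγ.code
    intro i
    rw [hγ.smul, hu]
    simp

/-- spanning multiplicity function -/
def SpM (μ : PX F m → ℕ) : Prop := ∀ a : Fin m → F, (∀ v, μ (pt v) ≠ 0 → v ⬝ᵥ a = 0) → a = 0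

theorem SpM_iff {n : ℕ} (x : Fin n → Fin m → F) : SpM (cm fun i => pt (x i)) ↔ Spn x := by
  refine forall_congr' fun a => imp_congr_left ?_
  constructor
  · intro h i
    exact h _ ((cm_ne_zero _ _).2 ⟨i, rfl⟩)
  · intro h v hv
    obtain ⟨i, hi⟩ := (cm_ne_zero _ _).1 hv
    obtain ⟨u, rfl⟩ := pt_eq.1 hi
    rw [smul_dotProduct, h, smul_zero]

end codes
/-- Counting linear codes: fix a finite field `F` (of prime power order `q`) and `m ∈ ℕ`.
If `N n` is a family of sets of `m`-dimensional codes of length `n` over `F`, stable under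
coordinate permutations, coordinate scalings and field automorphisms, and closed under
puncturing (when the dimension does not drop), then the number of isomorphism classes of
codes in `N n` is a quasipolynomial in `n` for `n ≫ 0`. -/
theorem quasipolynomial_count_of_linear_codes
    (F : Type) [Field F] [Fintype F] (m : ℕ)
    (N : ∀ n : ℕ, Set (Submodule F (Fin n → F)))
    (hdim : ∀ n : ℕ, ∀ C ∈ N n, Module.finrank F C = m)
    (hstable : ∀ (n : ℕ) (π : Equiv.Perm (Fin n)) (s : Fin n → Fˣ) (φ : F ≃+* F),
      ∀ C ∈ N n, ∃ D ∈ N n, (D : Set (Fin n → F)) = codeMap π s φ '' (C : Set (Fin n → F)))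
    (hpuncture : ∀ (n' n : ℕ) (π : Fin n' → Fin n), Function.Injective π →
      ∀ C ∈ N n, Module.finrank F (Submodule.map (LinearMap.funLeft F F π) C) = m →
        Submodule.map (LinearMap.funLeft F F π) C ∈ N n') :
    QuasiPolynomialCount (fun n =>
      Nat.card (Quot (fun (C D : {C : Submodule F (Fin n → F) // C ∈ N n}) =>
        ∃ (π : Equiv.Perm (Fin n)) (s : Fin n → Fˣ) (φ : F ≃+* F),
          codeMap π s φ '' (C.1 : Set (Fin n → F)) = (D.1 : Set (Fin n → F))))) := by
  classical
  have hfinPX : Finite (PX F m) := inferInstanceAs (Finite (Quotient _))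
  have : Fintype (PX F m) := Fintype.ofFinite _
  -- transport of membership along isomorphism
  have hN_iso : ∀ (n : ℕ) (C D : Submodule F (Fin n → F)), C ∈ N n →
      (∃ (π : Equiv.Perm (Fin n)) (s : Fin n → Fˣ) (φ : F ≃+* F),
        codeMap π s φ '' (C : Set (Fin n → F)) = D) → D ∈ N n := by
    rintro n C D hC ⟨π, s, φ, h⟩
    obtain ⟨D', hD', h'⟩ := hstable n π s φ C hC
    have : D' = D := SetLike.coe_injective (h'.trans h)
    rwa [← this]
  have hspn : ∀ (n : ℕ) (x : Fin n → Fin m → F), codeOf x ∈ N n → Spn x := fun n x hx =>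
    Spn_iff.2 (hdim n _ hx)
  let S : Set (PX F m → ℕ) :=
    {μ | ∃ (n : ℕ) (x : Fin n → Fin m → F), cm (fun i => pt (x i)) = μ ∧ codeOf x ∈ N n}
  have hS_sp : ∀ μ ∈ S, SpM μ := by
    rintro _ ⟨n, x, rfl, hx⟩
    exact (SpM_iff x).2 (hspn n x hx)
  have hS_mem : ∀ (n : ℕ) (x : Fin n → Fin m → F), cm (fun i => pt (x i)) ∈ S → codeOf x ∈ N n := by
    rintro n x hx
    have hsx : Spn x := (SpM_iff x).1 (hS_sp _ hx)
    obtain ⟨n', x', h, hx'⟩ := hx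
    have hn : n' = n := by
      have h1 := cm_sum (fun i => pt (x i))
      have h2 := cm_sum (fun i => pt (x' i))
      rw [h, h1] at h2
      simpa using h2.symm
    subst hn
    exact hN_iso _ _ _ hx' ((iso_iff (hspn _ _ hx') hsx).2 ⟨1, one_mem _, by rw [h]; rfl⟩)
  let U : LowerSet (PX F m → ℕ) := ⟨{μ | ¬ SpM μ}, by
    intro μ ν hle hμ hν
    apply hμ
    intro a ha
    apply hν a
    intro v hv
    apply ha v
    have h1 : ν (pt v) ≤ μ (pt v) := hle (pt v)
    exact fun h0 => hv (Nat.le_zero.1 (h1.trans h0.le))⟩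
  let T : LowerSet (PX F m → ℕ) := ⟨{μ | SpM μ → μ ∈ S}, by
    intro μ ν hle hμ hν
    have hμs : SpM μ := by
      by_contra hc
      exact (U.lower hle hc) hν
    obtain ⟨n, x, rfl, hx⟩ := hμ hμs
    obtain ⟨n', π, hπ, hc⟩ := cm_sub _ ν hle
    refine ⟨n', fun j => x (π j), hc, ?_⟩
    have hsp : Spn (fun j => x (π j)) := by
      rw [← SpM_iff, hc]; exact hν
    have hmap : Submodule.map (LinearMap.funLeft F F π) (codeOf x) = codeOf (fun j => x (π j)) := by
      rw [codeOf, codeOf, ← LinearMap.range_comp]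
      rfl
    rw [← hmap]
    apply hpuncture n' n π hπ _ hx
    rw [hmap]
    exact Spn_iff.1 hsp⟩
  have hUT : U ≤ T := fun μ hμ h => absurd h hμ
  have hSTU : S = (T : Set (PX F m → ℕ)) \ U := by
    ext μ
    constructor
    · intro h
      exact ⟨fun _ => h, fun h' => h' (hS_sp _ h)⟩
    · rintro ⟨h1, h2⟩
      exact h1 (not_not.1 h2)
  have hst : ∀ σ ∈ HG F m, ∀ μ ∈ S, μ ∘ σ ∈ S := by
    rintro σ hσ _ ⟨n, x, rfl, hx⟩
    obtain ⟨γ, φ, hγ, hγ'⟩ := (HG F m).inv_mem hσ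
    refine ⟨n, fun i => γ (x i), ?_, ?_⟩
    · simp only [← hγ']
      rw [cm_comp (fun i => pt (x i)), inv_inv]
    · exact hN_iso _ _ _ hx ⟨1, 1, φ, hγ.code _ _ _ _ (fun i => by simp)⟩
  have main := (orbits_evQ (HG F m) S T U hUT hSTU hst).quasi
  convert main using 2 with n
  -- columns for codes
  have hcols : ∀ C : {C : Submodule F (Fin n → F) // C ∈ N n},
      ∃ x : Fin n → Fin m → F, codeOf x = C.1 := fun C => exists_cols C.1 (hdim n _ C.2)
  choose X hX using hcols
  have hXN : ∀ C, codeOf (X C) ∈ N n := fun C => by rw [hX]; exact C.2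
  have hmu : ∀ μ : {μ : PX F m → ℕ // μ ∈ S ∧ ∑ p, μ p = n},
      ∃ x : Fin n → Fin m → F, cm (fun i => pt (x i)) = μ.1 ∧ codeOf x ∈ N n := by
    rintro ⟨μ, ⟨n', x, h, hx⟩, hn⟩
    have hn' : n' = n := by
      have h2 := cm_sum (fun i => pt (x i))
      rw [h, hn] at h2
      simpa using h2.symm
    subst hn'
    exact ⟨x, h, hx⟩
  choose Y hY hYN using hmu
  refine Nat.card_congr
    { toFun := Quot.map (fun C => ⟨cm (fun i => pt (X C i)), ⟨n, X C, rfl, hXN C⟩, by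
          rw [cm_sum]; simp⟩) ?_
      invFun := Quot.map (fun μ => ⟨codeOf (Y μ), hYN μ⟩) ?_
      left_inv := ?_
      right_inv := ?_ }
  · intro C D h
    apply (iso_iff (hspn _ _ (hXN C)) (hspn _ _ (hXN D))).1
    rw [hX, hX]; exact h
  · intro μ ν h
    apply (iso_iff (hspn _ _ (hYN μ)) (hspn _ _ (hYN ν))).2
    rw [hY, hY]; exact h
  · rintro ⟨C⟩
    apply Quot.sound
    change ∃ (π : Equiv.Perm (Fin n)) (s : Fin n → Fˣ) (φ : F ≃+* F),
          codeMap π s φ '' ((codeOf (Y _) : Submodule F (Fin n → F)) : Set (Fin n → F)) = (C.1 : Set (Fin n → F))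
    rw [← hX C]
    apply (iso_iff (hspn _ _ (hYN _)) (hspn _ _ (hXN C))).2
    exact ⟨1, one_mem _, by rw [hY]; rfl⟩
  · rintro ⟨μ⟩
    apply Quot.sound
    change ∃ σ ∈ HG F m, μ.1 = cm (fun i => pt (X ⟨codeOf (Y μ), hYN μ⟩ i)) ∘ σ
    rw [← hY μ]
    apply (iso_iff (hspn _ _ (hXN _)) (hspn _ _ (hYN μ))).1
    rw [hX]
    exact ⟨1, 1, RingEquiv.refl F, Semil.one.code _ _ _ _ (fun i => by simp)⟩
end

section
/- Let (I_n)_{n∈ℕ} be a symmetric wide-matrix ideal chain over a Noetherian commutative ring K. For any injection π : [m] → [n], the K-algebra map A_m → A_n defined by x_{i,j} ↦ x_{i,π(j)} sends I_m into I_n and hence induces a K-algebra homomorphism A_m/I_m → A_n/I_n. Then there exists n_0 ∈ ℕ such that for all m, n with n_0 ≤ m ≤ n and every injection π : [m] → [n], the induced homomorphism A_m/I_m → A_n/I_n is injective. -/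
open MvPolynomial

namespace WM

abbrev sh {c m n : ℕ} (σ : Fin m → Fin n) : Fin c × Fin m → Fin c × Fin n :=
  Prod.map (id : Fin c → Fin c) σ

lemma sh_inj {c m n : ℕ} {σ : Fin m → Fin n} (h : Function.Injective σ) :
    Function.Injective (sh (c := c) σ) := Function.injective_id.prodMap h

lemma rename_sh_sh {K : Type} [CommRing K] {c m n p : ℕ} (σ : Fin m → Fin n) (τ : Fin n → Fin p)
    (f : MvPolynomial (Fin c × Fin m) K) :
    rename (sh τ) (rename (sh σ) f) = rename (sh (τ ∘ σ)) f := by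
  rw [rename_rename]; rfl

/-- comparison key -/
def key {c n : ℕ} (u : Fin c × Fin n →₀ ℕ) : Lex (Fin n ×ₗ Fin c → ℕ) :=
  toLex (fun p => u ((ofLex p).2, (ofLex p).1))

lemma key_lt {c n : ℕ} (u v : Fin c × Fin n →₀ ℕ) : key u < key v ↔
    ∃ p : Fin n ×ₗ Fin c, (∀ q < p, u ((ofLex q).2, (ofLex q).1) = v ((ofLex q).2, (ofLex q).1)) ∧
      u ((ofLex p).2, (ofLex p).1) < v ((ofLex p).2, (ofLex p).1) := Iff.rfl

lemma key_inj {c n : ℕ} {u v : Fin c × Fin n →₀ ℕ} (h : key u = key v) : u = v := by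
  ext ⟨i, j⟩
  exact congrFun h (toLex (j, i))

lemma key_add {c n : ℕ} {u v : Fin c × Fin n →₀ ℕ} (t : Fin c × Fin n →₀ ℕ)
    (h : key u ≤ key v) : key (t + u) ≤ key (t + v) := by
  rcases h.lt_or_eq with h | h
  · refine le_of_lt ?_
    obtain ⟨p, h1, h2⟩ := (key_lt _ _).1 h
    refine (key_lt _ _).2 ?_
    refine ⟨p, fun q hq => ?_, ?_⟩
    · simp [h1 q hq]
    · simpa using h2
  · rw [key_inj h]

lemma md_apply {c m n : ℕ} {σ : Fin m → Fin n} (hσ : Function.Injective σ)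
    (u : Fin c × Fin m →₀ ℕ) (i : Fin c) (j : Fin m) :
    u.mapDomain (sh σ) (i, σ j) = u (i, j) :=
  Finsupp.mapDomain_apply (sh_inj hσ) u (i, j)

lemma md_zero {c m n : ℕ} {σ : Fin m → Fin n}
    (u : Fin c × Fin m →₀ ℕ) (i : Fin c) (j : Fin n) (h : ∀ k, σ k ≠ j) :
    u.mapDomain (sh σ) (i, j) = 0 := by
  apply Finsupp.mapDomain_of_notMem_range
  rintro ⟨⟨a, b⟩, hab⟩
  exact h b (congrArg Prod.snd hab)

lemma key_map {c m n : ℕ} {u v : Fin c × Fin m →₀ ℕ} {σ : Fin m → Fin n} (hσ : StrictMono σ)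
    (h : key u ≤ key v) : key (u.mapDomain (sh σ)) ≤ key (v.mapDomain (sh σ)) := by
  rcases h.lt_or_eq with h | h
  · refine le_of_lt ?_
    obtain ⟨p, h1, h2⟩ := (key_lt _ _).1 h
    refine (key_lt _ _).2 ?_
    refine ⟨toLex (σ (ofLex p).1, (ofLex p).2), fun q hq => ?_, ?_⟩
    · by_cases hr : ∃ k, σ k = (ofLex q).1
      · obtain ⟨k, hk⟩ := hr
        rw [← hk, md_apply hσ.injective, md_apply hσ.injective]
        refine h1 (toLex (k, (ofLex q).2)) ?_
        rw [Prod.Lex.lt_iff] at hq ⊢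
        simp only [ofLex_toLex] at hq ⊢
        rw [← hk, hσ.lt_iff_lt, hσ.injective.eq_iff] at hq
        exact hq
      · push Not at hr
        rw [md_zero _ _ _ hr, md_zero _ _ _ hr]
    · simp only [ofLex_toLex]
      rw [md_apply hσ.injective, md_apply hσ.injective]
      exact h2
  · rw [key_inj h]

lemma lead_shift {K : Type} [CommRing K] {c m n : ℕ} {u : Fin c × Fin m →₀ ℕ}
    {v : Fin c × Fin n →₀ ℕ} {σ : Fin m → Fin n} (hσ : StrictMono σ)
    (huv : ∀ i j, u (i, j) ≤ v (i, σ j)) (f : MvPolynomial (Fin c × Fin m) K)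
    (hf : ∀ w, coeff w f ≠ 0 → key w ≤ key u) :
    ∃ t, coeff v (monomial t 1 * rename (sh σ) f) = coeff u f ∧
      ∀ w, coeff w (monomial t 1 * rename (sh σ) f) ≠ 0 → key w ≤ key v := by
  have hle : u.mapDomain (sh σ) ≤ v := by
    rintro ⟨i, j⟩
    by_cases hr : ∃ k, σ k = j
    · obtain ⟨k, rfl⟩ := hr
      rw [md_apply hσ.injective]; exact huv i k
    · push Not at hr
      rw [md_zero _ _ _ hr]; exact Nat.zero_le _
  obtain ⟨t, ht⟩ : ∃ t, t + u.mapDomain (sh σ) = v := ⟨_, tsub_add_cancel_of_le hle⟩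
  refine ⟨t, ?_, ?_⟩
  · rw [← ht, coeff_monomial_mul, coeff_rename_mapDomain _ (sh_inj hσ.injective), one_mul]
  · intro w hw
    rw [coeff_monomial_mul'] at hw
    split_ifs at hw with h
    · rw [one_mul] at hw
      obtain ⟨u', hu', hc⟩ := coeff_rename_ne_zero _ _ _ hw
      have := key_add t (key_map hσ (hf u' hc))
      rwa [ht, hu', add_tsub_cancel_of_le h] at this
    · exact absurd rfl hw

lemma higman {K : Type} [CommRing K] [IsNoetherianRing K] {c : ℕ}
    (L : ∀ n, (Fin c × Fin n →₀ ℕ) → Ideal K)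
    (hL : ∀ m n u v (σ : Fin m → Fin n), StrictMono σ → (∀ i j, u (i, j) ≤ v (i, σ j)) →
      L m u ≤ L n v) :
    ∃ d, ∀ n v, ∃ k ≤ d, ∃ u, ∃ σ : Fin k → Fin n, StrictMono σ ∧
      (∀ i j, u (i, j) ≤ v (i, σ j)) ∧ L n v ≤ L k u := by
  by_contra hcon
  push Not at hcon
  choose N V hV using hcon
  let W : ℕ → List (Fin c → ℕ) := fun d => List.ofFn (fun j i => V d (i, j))
  have hp : (Set.univ : Set (Fin c → ℕ)).PartiallyWellOrderedOn (· ≤ ·) :=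
    Set.isPWO_of_wellQuasiOrderedLE _
  have hp2 := Set.PartiallyWellOrderedOn.partiallyWellOrderedOn_sublistForall₂ (· ≤ ·) hp
  have : IsPreorder (List (Fin c → ℕ)) (List.SublistForall₂ (· ≤ ·)) :=
    { List.SublistForall₂.is_refl, List.SublistForall₂.is_trans with }
  obtain ⟨g, hg⟩ := hp2.exists_monotone_subseq (f := W) (fun n x _ => Set.mem_univ _)
  have emb : ∀ a b, a ≤ b → ∃ σ : Fin (N (g a)) → Fin (N (g b)), StrictMono σ ∧
      ∀ i j, V (g a) (i, j) ≤ V (g b) (i, σ j) := by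
    intro a b hab
    obtain ⟨l, h1, h2⟩ := List.sublistForall₂_iff.1 (hg a b hab)
    obtain ⟨e, he⟩ := List.sublist_iff_exists_fin_orderEmbedding_get_eq.1 h2
    have hlen := h1.length_eq
    have ha : (W (g a)).length = N (g a) := List.length_ofFn
    have hb : (W (g b)).length = N (g b) := List.length_ofFn
    refine ⟨fun j => Fin.cast hb (e (Fin.cast (ha.symm.trans hlen) j)), ?_, ?_⟩
    · intro x y hxy
      have : Fin.cast (ha.symm.trans hlen) x < Fin.cast (ha.symm.trans hlen) y := hxy
      exact e.strictMono this
    · intro i j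
      have h3 := (List.forall₂_iff_get.1 h1).2 j (by rw [ha]; exact j.2)
        (by rw [← hlen, ha]; exact j.2)
      have h4 := he (Fin.cast (ha.symm.trans hlen) j)
      have h5 : (W (g a)).get ⟨j, by rw [ha]; exact j.2⟩ = fun i => V (g a) (i, j) := by
        simp [W]
      have h6 : (W (g b)).get (e (Fin.cast (ha.symm.trans hlen) j)) =
          fun i => V (g b) (i, Fin.cast hb (e (Fin.cast (ha.symm.trans hlen) j))) := by
        simp [W]; rfl
      rw [h5] at h3
      have h7 := h3 i
      have h8 := congrFun (h4.trans h6) i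
      exact h7.trans h8.le
  let F : ℕ →o Ideal K := ⟨fun a => L _ (V (g a)), fun a b hab => by
    obtain ⟨σ, h1, h2⟩ := emb a b hab
    exact hL _ _ _ _ σ h1 h2⟩
  obtain ⟨a, ha⟩ := monotone_stabilizes_iff_noetherian.2 (inferInstance : IsNoetherian K K) F
  let b := max a (N (g a))
  obtain ⟨σ, h1, h2⟩ := emb a b (le_max_left _ _)
  refine hV (g b) (N (g a)) ?_ _ σ h1 h2 ?_
  · exact (le_max_right a _).trans (g.strictMono.id_le b)
  · exact (ha b (le_max_left _ _)).ge

section main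
variable {K : Type} [CommRing K] {c : ℕ}
    (I : ∀ n : ℕ, Ideal (MvPolynomial (Fin c × Fin n) K))

def Good : Prop := ∀ (m n : ℕ) (π : Fin m → Fin n), Function.Injective π →
      ∀ f ∈ I m, rename (sh π) f ∈ I n

variable {I}

lemma exists_perm {k n : ℕ} (σ ρ : Fin k → Fin n) (hσ : Function.Injective σ)
    (hρ : Function.Injective ρ) : ∃ τ : Equiv.Perm (Fin n), τ ∘ σ = ρ := by
  obtain ⟨g, hg⟩ := MulAction.isMultiplyPretransitive_iff.1
    (Equiv.Perm.isMultiplyPretransitive (Fin n) k) ⟨σ, hσ⟩ ⟨ρ, hρ⟩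
  exact ⟨g, by funext x; exact congrArg (fun e : Fin k ↪ Fin n => e x) hg⟩

lemma good_of (hsym : ∀ (n : ℕ) (π : Equiv.Perm (Fin n)),
      Ideal.map (rename (Prod.map (id : Fin c → Fin c) π)) (I n) = I n)
    (hincl : ∀ n : ℕ,
      Ideal.map (rename (Prod.map (id : Fin c → Fin c) (Fin.castSucc : Fin n → Fin (n + 1))))
        (I n) ≤ I (n + 1)) : Good I := by
  have h1 : ∀ m n (h : m ≤ n), ∀ f ∈ I m, rename (sh (Fin.castLE h)) f ∈ I n := by
    intro m n h f hf
    induction n, h using Nat.le_induction with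
    | base =>
      have : sh (c := c) (Fin.castLE (le_refl m)) = id := by ext ⟨i, j⟩ <;> rfl
      rw [this, rename_id_apply]; exact hf
    | succ n h ih =>
      have := hincl n (Ideal.mem_map_of_mem _ ih)
      rw [rename_sh_sh] at this
      exact this
  intro m n π hπ f hf
  have hmn : m ≤ n := by simpa using Fintype.card_le_of_injective π hπ
  obtain ⟨τ, hτ⟩ := exists_perm (Fin.castLE hmn) π (Fin.castLE_injective hmn) hπ
  have h2 := Ideal.mem_map_of_mem (rename (sh (c := c) τ)) (h1 m n hmn f hf)
  rw [rename_sh_sh, hτ] at h2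
  exact (hsym n τ).le h2

lemma transfer (hI : Good I) {k N n : ℕ} (σ : Fin k → Fin N) (ρ : Fin k → Fin n)
    (hσ : Function.Injective σ) (hρ : Function.Injective ρ) (h : N ≤ n)
    (f : MvPolynomial (Fin c × Fin k) K) (hf : rename (sh σ) f ∈ I N) :
    rename (sh ρ) f ∈ I n := by
  obtain ⟨τ, hτ⟩ := exists_perm (Fin.castLE h ∘ σ) ρ ((Fin.castLE_injective h).comp hσ) hρ
  have := hI N n (τ ∘ Fin.castLE h) (τ.injective.comp (Fin.castLE_injective h)) _ hf
  rw [rename_sh_sh, Function.comp_assoc, hτ] at this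
  exact this

/-- saturation -/
def J (hI : Good I) (k : ℕ) : Ideal (MvPolynomial (Fin c × Fin k) K) where
  carrier := {f | ∃ N, ∃ σ : Fin k → Fin N, Function.Injective σ ∧ rename (sh σ) f ∈ I N}
  zero_mem' := ⟨k, id, Function.injective_id, by simp⟩
  add_mem' := by
    rintro f g ⟨N, σ, hσ, hf⟩ ⟨M, τ, hτ, hg⟩
    have hρ : Function.Injective (Fin.castLE (le_max_left N M) ∘ σ) :=
      (Fin.castLE_injective _).comp hσ
    refine ⟨max N M, Fin.castLE (le_max_left N M) ∘ σ, hρ, ?_⟩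
    rw [map_add]
    exact add_mem (transfer hI σ _ hσ hρ (le_max_left _ _) f hf)
      (transfer hI τ _ hτ hρ (le_max_right _ _) g hg)
  smul_mem' := by
    rintro a f ⟨N, σ, hσ, hf⟩
    refine ⟨N, σ, hσ, ?_⟩
    rw [smul_eq_mul, map_mul]
    exact Ideal.mul_mem_left _ _ hf

lemma mem_J (hI : Good I) (k : ℕ) (f : MvPolynomial (Fin c × Fin k) K) : f ∈ J hI k ↔
    ∃ N, ∃ σ : Fin k → Fin N, Function.Injective σ ∧ rename (sh σ) f ∈ I N := Iff.rfl

lemma I_le_J (hI : Good I) (k : ℕ) : I k ≤ J hI k := fun f hf =>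
  (mem_J hI k f).2 ⟨k, id, Function.injective_id, hI k k id Function.injective_id f hf⟩

lemma J_rename (hI : Good I) {m n : ℕ} (ρ : Fin m → Fin n) (hρ : Function.Injective ρ)
    (f : MvPolynomial (Fin c × Fin m) K) (hf : f ∈ J hI m) : rename (sh ρ) f ∈ J hI n := by
  obtain ⟨N, σ, hσ, h⟩ := (mem_J hI m f).1 hf
  refine (mem_J hI n _).2 ⟨max N n, Fin.castLE (le_max_right _ _), Fin.castLE_injective _, ?_⟩
  rw [rename_sh_sh]
  exact transfer hI σ _ hσ ((Fin.castLE_injective _).comp hρ) (le_max_left _ _) f h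

lemma J_bound1 [IsNoetherianRing K] (hI : Good I) (k : ℕ) : ∃ N, ∀ n, N ≤ n →
    ∀ σ : Fin k → Fin n, Function.Injective σ → ∀ f ∈ J hI k, rename (sh σ) f ∈ I n := by
  obtain ⟨S, hS⟩ := (isNoetherianRing_iff_ideal_fg _).1 inferInstance (J hI k)
  have hmem : ∀ f : S, (f : MvPolynomial (Fin c × Fin k) K) ∈ J hI k := fun f => by
    rw [← hS]; exact Ideal.subset_span f.2
  choose N σ hσ hf using fun f : S => (mem_J hI k f).1 (hmem f)
  refine ⟨Finset.univ.sup N, fun n hn ρ hρ f hfJ => ?_⟩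
  have : J hI k ≤ Ideal.comap (rename (sh (c := c) ρ)) (I n) := by
    rw [← hS, Ideal.span_le]
    intro g hg
    exact transfer hI (σ ⟨g, hg⟩) ρ (hσ _) hρ
      ((Finset.le_sup (f := N) (Finset.mem_univ ⟨g, hg⟩)).trans hn) g (hf _)
  exact this hfJ

lemma J_bound [IsNoetherianRing K] (hI : Good I) (d : ℕ) : ∃ N, ∀ k ≤ d, ∀ n, N ≤ n →
    ∀ σ : Fin k → Fin n, Function.Injective σ → ∀ f ∈ J hI k, rename (sh σ) f ∈ I n := by
  choose N hN using J_bound1 hI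
  refine ⟨(Finset.range (d + 1)).sup N, fun k hk n hn => hN k n (le_trans ?_ hn)⟩
  exact Finset.le_sup (f := N) (Finset.mem_range.2 (by omega))

/-- leading coefficients -/
def Lc (hI : Good I) (n : ℕ) (u : Fin c × Fin n →₀ ℕ) : Ideal K where
  carrier := {a | ∃ f ∈ J hI n, coeff u f = a ∧ ∀ w, coeff w f ≠ 0 → key w ≤ key u}
  zero_mem' := ⟨0, zero_mem _, by simp, by simp⟩
  add_mem' := by
    rintro a b ⟨f, hf, rfl, hf2⟩ ⟨g, hg, rfl, hg2⟩
    refine ⟨f + g, add_mem hf hg, coeff_add _ _ _, fun w hw => ?_⟩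
    by_cases h : coeff w f = 0
    · refine hg2 w fun h' => hw ?_
      rw [coeff_add, h, h', add_zero]
    · exact hf2 w h
  smul_mem' := by
    rintro a b ⟨f, hf, rfl, hf2⟩
    refine ⟨C a * f, Ideal.mul_mem_left _ _ hf, coeff_C_mul _ _ _, fun w hw => hf2 w fun h => hw ?_⟩
    rw [coeff_C_mul, h, mul_zero]

lemma mem_Lc (hI : Good I) (n : ℕ) (u : Fin c × Fin n →₀ ℕ) (a : K) : a ∈ Lc hI n u ↔
    ∃ f ∈ J hI n, coeff u f = a ∧ ∀ w, coeff w f ≠ 0 → key w ≤ key u := Iff.rfl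

lemma J_eq [IsNoetherianRing K] (hI : Good I) : ∃ n₀, ∀ n, n₀ ≤ n → J hI n ≤ I n := by
  obtain ⟨d, hd⟩ := higman (Lc hI) (by
    intro m n u v σ hσ huv a ha
    obtain ⟨f, hf, rfl, hf2⟩ := (mem_Lc _ _ _ _).1 ha
    obtain ⟨t, h1, h2⟩ := lead_shift hσ huv f hf2
    exact (mem_Lc _ _ _ _).2
      ⟨_, Ideal.mul_mem_left _ _ (J_rename hI σ hσ.injective f hf), h1, h2⟩)
  obtain ⟨N, hN⟩ := J_bound hI d
  refine ⟨N, fun n hn => ?_⟩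
  have red : ∀ f ∈ J hI n, (∀ u, coeff u f ≠ 0 → (∀ w, coeff w f ≠ 0 → key w ≤ key u) →
      f ∈ I n) → f ∈ I n := by
    intro f hf h
    by_cases h0 : f = 0
    · rw [h0]; exact zero_mem _
    · obtain ⟨u, hu, hmax⟩ := Finset.exists_max_image f.support key (support_nonempty.2 h0)
      exact h u (mem_support_iff.1 hu) fun w hw => hmax w (mem_support_iff.2 hw)
  have main : ∀ κ : Lex (Fin n ×ₗ Fin c → ℕ), ∀ u, key u = κ → ∀ f ∈ J hI n,
      (∀ w, coeff w f ≠ 0 → key w ≤ key u) → f ∈ I n := by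
    intro κ
    induction κ using WellFoundedLT.induction with
    | ind κ ih =>
    rintro u rfl f hf hfu
    obtain ⟨k, hk, u', σ, hσ, huv, hle⟩ := hd n u
    obtain ⟨f', hf', hc, hf2⟩ := (mem_Lc _ _ _ _).1 (hle ((mem_Lc _ _ _ _).2 ⟨f, hf, rfl, hfu⟩))
    obtain ⟨t, h1, h2⟩ := lead_shift hσ huv f' hf2
    have hg : monomial t 1 * rename (sh σ) f' ∈ I n :=
      Ideal.mul_mem_left _ _ (hN k hk n hn σ hσ.injective f' hf')
    generalize monomial t 1 * rename (sh σ) f' = g at h1 h2 hg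
    have hfg : f - g ∈ J hI n := sub_mem hf (I_le_J hI n hg)
    have hmem : f - g ∈ I n := by
      refine red _ hfg fun v hv hmax => ih (key v) ?_ v rfl _ hfg hmax
      refine lt_of_le_of_ne ?_ ?_
      · by_cases h : coeff v f = 0
        · refine h2 v fun h' => hv ?_
          rw [coeff_sub, h, h', sub_zero]
        · exact hfu v h
      · intro he
        rw [key_inj he, coeff_sub, h1, hc, sub_self] at hv
        exact hv rfl
    simpa using add_mem hmem hg
  intro f hf
  exact red f hf fun u _ hmax => main _ u rfl f hf hmax

end main
end WM

/-- For a symmetric wide-matrix ideal chain `(I n)` over a Noetherian ring `K`, every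
injection `π : [m] → [n]` maps `I m` into `I n`, and there is an `n₀` such that for all
`n₀ ≤ m ≤ n` and every injection `π : [m] → [n]` the induced homomorphism
`A_m/I_m → A_n/I_n` is injective. -/
theorem wide_matrix_chain_eventually_injective_transition_maps
    (K : Type) [CommRing K] [IsNoetherianRing K] (c : ℕ)
    (I : ∀ n : ℕ, Ideal (MvPolynomial (Fin c × Fin n) K))
    (hsym : ∀ (n : ℕ) (π : Equiv.Perm (Fin n)),
      Ideal.map (rename (Prod.map (id : Fin c → Fin c) π)) (I n) = I n)
    (hincl : ∀ n : ℕ,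
      Ideal.map (rename (Prod.map (id : Fin c → Fin c) (Fin.castSucc : Fin n → Fin (n + 1))))
        (I n) ≤ I (n + 1)) :
    (∀ (m n : ℕ) (π : Fin m → Fin n), Function.Injective π →
      Ideal.map (rename (Prod.map (id : Fin c → Fin c) π)) (I m) ≤ I n) ∧
    ∃ n₀ : ℕ, ∀ (m n : ℕ), n₀ ≤ m → m ≤ n → ∀ (π : Fin m → Fin n), Function.Injective π →
      ∀ h : I m ≤ Ideal.comap ((rename (Prod.map (id : Fin c → Fin c) π)).toRingHom) (I n),
        Function.Injective
          (Ideal.quotientMap (I n) ((rename (Prod.map (id : Fin c → Fin c) π)).toRingHom) h) := by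
  have hI := WM.good_of hsym hincl
  refine ⟨fun m n π hπ => Ideal.map_le_iff_le_comap.2 fun f hf => hI m n π hπ f hf, ?_⟩
  obtain ⟨n₀, h₀⟩ := WM.J_eq hI
  refine ⟨n₀, fun m n hm _ π hπ h => Ideal.quotientMap_injective' fun f hf => ?_⟩
  exact h₀ m hm ((WM.mem_J hI m f).2 ⟨n, π, hπ, hf⟩)
end

section
/- Let (I_n)_{n∈ℕ} be a symmetric wide-matrix ideal chain over a Noetherian commutative ring K such that every I_n is a radical ideal, for every injection π : [m] → [n] the induced K-algebra homomorphism A_m/I_m → A_n/I_n is injective, and I_0 ≠ A_0 (i.e. 1 ≠ 0 in A_0/I_0). Then there exist n_0 ∈ ℕ and a nonzero element h ∈ A_{n_0}/I_{n_0} with the following property. For n ∈ ℕ set B'_n := (A_{n_0+n}/I_{n_0+n})[1/h], the localization at the image of h under the homomorphism induced by the inclusion [n_0] ⊆ [n_0+n]; each B'_n is a B'_0-algebra, and for j ∈ [n] let ι_j : B'_1 → B'_n be the B'_0-algebra homomorphism induced by the injection [n_0+1] → [n_0+n] that fixes [n_0] and sends n_0+1 to n_0+j. Then for every n ≥ 1,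 the B'_0-algebra homomorphism from the n-fold tensor product B'_1 ⊗_{B'_0} ⋯ ⊗_{B'_0} B'_1 to B'_n whose j-th tensor factor maps via ι_j is an isomorphism. -/
open MvPolynomial
open scoped TensorProduct

namespace WideMatrixShift

variable (K : Type) [CommRing K] (c : ℕ)
variable (I : ∀ n : ℕ, Ideal (MvPolynomial (Fin c × Fin n) K))

/-- The quotient `A_n / I_n`. -/
def Qu (n : ℕ) : Type := MvPolynomial (Fin c × Fin n) K ⧸ I n

noncomputable instance (n : ℕ) : CommRing (Qu K c I n) :=
  inferInstanceAs (CommRing (MvPolynomial (Fin c × Fin n) K ⧸ I n))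

/-- The property that every injection `[m] → [n]` maps `I m` into `I n`. -/
def ChainMap : Prop := ∀ (m n : ℕ) (π : Fin m → Fin n), Function.Injective π →
  Ideal.map ((rename (Prod.map (id : Fin c → Fin c) π)).toRingHom) (I m) ≤ I n

/-- The homomorphism `A_m/I_m → A_n/I_n` induced by an injection `π : [m] → [n]`. -/
noncomputable def ind (hmap : ChainMap K c I) (m n : ℕ) (π : Fin m → Fin n)
    (hπ : Function.Injective π) : Qu K c I m →+* Qu K c I n :=
  Ideal.quotientMap (I n) ((rename (Prod.map (id : Fin c → Fin c) π)).toRingHom)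
    (Ideal.map_le_iff_le_comap.mp (hmap m n π hπ))

theorem castAdd_inj (m n : ℕ) : Function.Injective (Fin.castAdd n : Fin m → Fin (m + n)) := by
  intro x y hxy
  apply Fin.ext
  simpa using congrArg Fin.val hxy

theorem ind_ind (hmap : ChainMap K c I) (l m n : ℕ) (π : Fin m → Fin n)
    (π' : Fin l → Fin m) (ρ : Fin l → Fin n) (hπ : Function.Injective π)
    (hπ' : Function.Injective π') (hρ : Function.Injective ρ)
    (hcomp : π ∘ π' = ρ) (x : Qu K c I l) :
    ind K c I hmap m n π hπ (ind K c I hmap l m π' hπ' x)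
      = ind K c I hmap l n ρ hρ x := by
  subst hcomp
  obtain ⟨y, rfl⟩ := Ideal.Quotient.mk_surjective
    (I := I l) (x : MvPolynomial (Fin c × Fin l) K ⧸ I l)
  show Ideal.quotientMap _ _ _ (Ideal.quotientMap _ _ _ (Ideal.Quotient.mk _ y)) = _
  simp only [Ideal.quotientMap_mk, AlgHom.toRingHom_eq_coe, RingHom.coe_coe]
  rw [rename_rename]
  rfl

/-- The injection `[n₀+1] → [n₀+n]` fixing `[n₀]` and sending `n₀+1` to `n₀+j`. -/
def iotaJ (n₀ n : ℕ) (j : Fin n) : Fin (n₀ + 1) → Fin (n₀ + n) :=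
  fun i => if h : (i : ℕ) < n₀ then ⟨(i : ℕ), lt_of_lt_of_le h (Nat.le_add_right _ _)⟩
    else ⟨n₀ + (j : ℕ), Nat.add_lt_add_left j.isLt n₀⟩

theorem iotaJ_inj (n₀ n : ℕ) (j : Fin n) : Function.Injective (iotaJ n₀ n j) := by
  intro a b hab
  have ha := a.isLt
  have hb := b.isLt
  simp only [iotaJ] at hab
  split_ifs at hab with h1 h2 h2 <;>
    · apply Fin.ext
      have hv := congrArg Fin.val hab
      simp only at hv
      omega

variable (hmap : ChainMap K c I) (n₀ : ℕ) (h : Qu K c I n₀)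

/-- The image of `h` in `A_{n₀+n}/I_{n₀+n}`. -/
noncomputable def hImg (n : ℕ) : Qu K c I (n₀ + n) :=
  ind K c I hmap n₀ (n₀ + n) (Fin.castAdd n) (castAdd_inj n₀ n) h

/-- `B'_n = (A_{n₀+n}/I_{n₀+n})[1/h]`. -/
noncomputable abbrev Bp (n : ℕ) : Type := Localization.Away (hImg K c I hmap n₀ h n)

/-- The structure homomorphism `B'_0 = (A_{n₀}/I_{n₀})[1/h] → B'_n`. -/
noncomputable def structMap (n : ℕ) : Localization.Away h →+* Bp K c I hmap n₀ h n :=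
  Localization.awayLift
    ((algebraMap (Qu K c I (n₀ + n)) (Bp K c I hmap n₀ h n)).comp
      (ind K c I hmap n₀ (n₀ + n) (Fin.castAdd n) (castAdd_inj n₀ n))) h
    (IsLocalization.map_units (Bp K c I hmap n₀ h n)
      ⟨hImg K c I hmap n₀ h n, Submonoid.mem_powers _⟩)

theorem iotaJ_comp_castAdd (n₀ n : ℕ) (j : Fin n) :
    iotaJ n₀ n j ∘ (Fin.castAdd 1) = Fin.castAdd n := by
  funext i
  simp only [Function.comp_apply, iotaJ]
  rw [dif_pos (by simpa using i.isLt)]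
  apply Fin.ext
  simp

theorem ind_iotaJ_hImg (n : ℕ) (j : Fin n) :
    ind K c I hmap (n₀ + 1) (n₀ + n) (iotaJ n₀ n j) (iotaJ_inj n₀ n j)
        (hImg K c I hmap n₀ h 1)
      = hImg K c I hmap n₀ h n := by
  unfold hImg
  exact ind_ind K c I hmap n₀ (n₀ + 1) (n₀ + n) (iotaJ n₀ n j) (Fin.castAdd 1)
    (Fin.castAdd n) (iotaJ_inj n₀ n j) (castAdd_inj n₀ 1) (castAdd_inj n₀ n)
    (iotaJ_comp_castAdd n₀ n j) h

/-- The homomorphism `ι_j : B'_1 → B'_n` induced by the injection `[n₀+1] → [n₀+n]`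
fixing `[n₀]` and sending `n₀+1` to `n₀+j`. -/
noncomputable def iotaLoc (n : ℕ) (j : Fin n) :
    Bp K c I hmap n₀ h 1 →+* Bp K c I hmap n₀ h n :=
  Localization.awayLift
    ((algebraMap (Qu K c I (n₀ + n)) (Bp K c I hmap n₀ h n)).comp
      (ind K c I hmap (n₀ + 1) (n₀ + n) (iotaJ n₀ n j) (iotaJ_inj n₀ n j)))
    (hImg K c I hmap n₀ h 1)
    (by
      have hkey := ind_iotaJ_hImg K c I hmap n₀ h n j
      rw [RingHom.comp_apply, hkey]
      exact IsLocalization.map_units (Bp K c I hmap n₀ h n)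
        ⟨hImg K c I hmap n₀ h n, Submonoid.mem_powers _⟩)


/-- Linear independence along a ring homomorphism. -/
def LI {R A ι : Type} [CommRing R] [CommRing A] (f : R →+* A) (b : ι → A) : Prop :=
  ∀ (s : Finset ι) (l : ι → R), ∑ i ∈ s, f (l i) * b i = 0 → ∀ i ∈ s, l i = 0

theorem LI.tower {R A B ι κ : Type} [CommRing R] [CommRing A] [CommRing B]
    {f : R →+* A} {g : A →+* B} {b : ι → A} {d : κ → B} (hb : LI f b) (hd : LI g d) :
    LI (g.comp f) (fun p : ι × κ => g (b p.1) * d p.2) := by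
  letI := f.toAlgebra
  letI := g.toAlgebra
  letI := (g.comp f).toAlgebra
  haveI : IsScalarTower R A B := IsScalarTower.of_algebraMap_eq fun x => rfl
  have h1 : LinearIndependent R b := linearIndependent_iff'.mpr fun s l h => hb s l (by
    simpa [Algebra.smul_def, RingHom.algebraMap_toAlgebra] using h)
  have h2 : LinearIndependent A d := linearIndependent_iff'.mpr fun s l h => hd s l (by
    simpa [Algebra.smul_def, RingHom.algebraMap_toAlgebra] using h)
  have h3 := linearIndependent_smul h1 h2
  intro s l h
  refine linearIndependent_iff'.mp h3 s l ?_
  simpa [Algebra.smul_def, RingHom.algebraMap_toAlgebra] using h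

/-- The monomial with exponent `u` in column `j`. -/
noncomputable def colm (m : ℕ) (j : Fin m) (u : Fin c →₀ ℕ) : Qu K c I m :=
  Ideal.Quotient.mk (I m) (∏ i, X (i, j) ^ (u i))

theorem colm_add (m : ℕ) (j : Fin m) (u v : Fin c →₀ ℕ) :
    colm K c I m j (u + v) = colm K c I m j u * colm K c I m j v := by
  unfold colm
  refine Eq.trans ?_ (map_mul (Ideal.Quotient.mk (I m)) _ _)
  congr 1
  simp [pow_add, Finset.prod_mul_distrib]

theorem ind_mk (m n : ℕ) (π : Fin m → Fin n) (hπ : Function.Injective π)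
    (p : MvPolynomial (Fin c × Fin m) K) :
    ind K c I hmap m n π hπ (Ideal.Quotient.mk (I m) p)
      = Ideal.Quotient.mk (I n) (rename (Prod.map (id : Fin c → Fin c) π) p) := rfl

theorem ind_colm (m n : ℕ) (π : Fin m → Fin n) (hπ : Function.Injective π) (j : Fin m)
    (u : Fin c →₀ ℕ) :
    ind K c I hmap m n π hπ (colm K c I m j u) = colm K c I n (π j) u := by
  unfold colm
  rw [ind_mk]
  congr 1
  simp

/-- The map `A_m/I_m → A_{m+1}/I_{m+1}`. -/
noncomputable def step (m : ℕ) : Qu K c I m →+* Qu K c I (m + 1) :=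
  ind K c I hmap m (m + 1) Fin.castSucc (Fin.castSucc_injective m)

theorem step_castAdd (m k : ℕ) (x : Qu K c I m) :
    step K c I hmap (m + k) (ind K c I hmap m (m + k) (Fin.castAdd k) (castAdd_inj m k) x)
      = ind K c I hmap m (m + (k + 1)) (Fin.castAdd (k + 1)) (castAdd_inj m (k + 1)) x :=
  ind_ind K c I hmap m (m + k) (m + k + 1) Fin.castSucc (Fin.castAdd k) (Fin.castAdd (k + 1))
    (Fin.castSucc_injective _) (castAdd_inj m k) (castAdd_inj m (k + 1)) rfl x

/-- Leading exponents in a new column with coefficient `h`. -/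
def Mset (o : MonomialOrder (Fin c)) (m : ℕ) (h : Qu K c I m) : Set (Fin c →₀ ℕ) :=
  {u | ∃ (s : Finset (Fin c →₀ ℕ)) (l : (Fin c →₀ ℕ) → Qu K c I m),
    (∀ v ∈ s, o.toSyn v < o.toSyn u) ∧
    step K c I hmap m h * colm K c I (m + 1) (Fin.last m) u
      = ∑ v ∈ s, step K c I hmap m (l v) * colm K c I (m + 1) (Fin.last m) v}

theorem Mset_up (o : MonomialOrder (Fin c)) (m : ℕ) (h : Qu K c I m) (u w : Fin c →₀ ℕ)
    (hu : u ∈ Mset K c I hmap o m h) : u + w ∈ Mset K c I hmap o m h := by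
  obtain ⟨s, l, hs, he⟩ := hu
  refine ⟨s.map (addRightEmbedding w), fun v => l (v - w), ?_, ?_⟩
  · intro v hv
    obtain ⟨v', hv', rfl⟩ := Finset.mem_map.mp hv
    simpa using hs v' hv'
  · rw [colm_add, ← mul_assoc, he, Finset.sum_mul, Finset.sum_map]
    refine Finset.sum_congr rfl fun v _ => ?_
    simp [colm_add, mul_assoc]

theorem iotaJ_last (m n : ℕ) (j : Fin n) : iotaJ m n j (Fin.last m) = Fin.natAdd m j := by
  simp [iotaJ]
  rfl

theorem Mset_mono (o : MonomialOrder (Fin c)) (m : ℕ) (h : Qu K c I m) (k : ℕ)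
    (h' : Qu K c I (m + k)) :
    Mset K c I hmap o m h ⊆ Mset K c I hmap o (m + k) (hImg K c I hmap m h k * h') := by
  rintro u ⟨s, l, hs, he⟩
  have key : ∀ x : Qu K c I m,
      ind K c I hmap (m + 1) (m + k + 1) (iotaJ m (k + 1) (Fin.last k))
        (iotaJ_inj m (k + 1) (Fin.last k)) (step K c I hmap m x)
      = step K c I hmap (m + k)
        (ind K c I hmap m (m + k) (Fin.castAdd k) (castAdd_inj m k) x) := by
    intro x
    unfold step
    exact (ind_ind K c I hmap _ _ _ _ _ (Fin.castAdd (k + 1)) _ _ (castAdd_inj m (k + 1))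
      (iotaJ_comp_castAdd m (k + 1) (Fin.last k)) x).trans
      (step_castAdd K c I hmap m k x).symm
  refine ⟨s, fun v => ind K c I hmap m (m + k) (Fin.castAdd k) (castAdd_inj m k) (l v) * h',
    hs, ?_⟩
  have := congrArg (fun x => step K c I hmap (m + k) h' *
    ind K c I hmap (m + 1) (m + k + 1) (iotaJ m (k + 1) (Fin.last k))
        (iotaJ_inj m (k + 1) (Fin.last k)) x) he
  simp only [map_mul, map_sum, key, ind_colm, iotaJ_last] at this
  have e : (Fin.natAdd m (Fin.last k) : Fin (m + (k + 1))) = Fin.last (m + k) := rfl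
  rw [e] at this
  unfold hImg
  rw [map_mul, mul_right_comm, mul_comm, this, Finset.mul_sum]
  refine Finset.sum_congr rfl fun v _ => ?_
  rw [map_mul]; ring

theorem exists_max (o : MonomialOrder (Fin c)) (hne : I 0 ≠ ⊤) :
    ∃ (n₀ : ℕ) (h : Qu K c I n₀), h ≠ 0 ∧ ∀ (k : ℕ) (h' : Qu K c I (n₀ + k)),
      hImg K c I hmap n₀ h k * h' ≠ 0 →
      Mset K c I hmap o (n₀ + k) (hImg K c I hmap n₀ h k * h') ⊆ Mset K c I hmap o n₀ h := by
  let J : (Σ n, Qu K c I n) → Ideal (MvPolynomial (Fin c) ℚ) := fun p =>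
    Ideal.span ((fun s => monomial s (1 : ℚ)) '' Mset K c I hmap o p.1 p.2)
  have wf : WellFounded ((· > ·) : Ideal (MvPolynomial (Fin c) ℚ) → _ → Prop) :=
    IsWellFounded.wf
  haveI : Nontrivial (Qu K c I 0) := Ideal.Quotient.nontrivial_iff.mpr hne
  obtain ⟨_, ⟨⟨n₀, h⟩, hh, rfl⟩, hmax⟩ := wf.has_min (J '' {p | p.2 ≠ 0})
    ⟨_, ⟨0, 1⟩, one_ne_zero, rfl⟩
  refine ⟨n₀, h, hh, fun k h' hk u hu => ?_⟩
  have hle : J ⟨n₀, h⟩ ≤ J ⟨n₀ + k, hImg K c I hmap n₀ h k * h'⟩ :=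
    Ideal.span_mono (Set.image_mono (Mset_mono K c I hmap o n₀ h k h'))
  have hnlt := hmax _ ⟨⟨n₀ + k, hImg K c I hmap n₀ h k * h'⟩, hk, rfl⟩
  have heq : J ⟨n₀, h⟩ = J ⟨n₀ + k, hImg K c I hmap n₀ h k * h'⟩ :=
    eq_of_le_of_not_lt hle hnlt
  have hm : monomial u (1 : ℚ) ∈ J ⟨n₀, h⟩ := by
    rw [heq]
    exact Ideal.subset_span ⟨u, hu, rfl⟩
  obtain ⟨v, hv, hvu⟩ := mem_ideal_span_monomial_image.mp hm u (by simp)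
  obtain ⟨w, rfl⟩ := exists_add_of_le hvu
  exact Mset_up K c I hmap o n₀ h v w hv

theorem step_hImg (n : ℕ) :
    step K c I hmap (n₀ + n) (hImg K c I hmap n₀ h n) = hImg K c I hmap n₀ h (n + 1) :=
  step_castAdd K c I hmap n₀ n h

/-- The map `B'_n → B'_{n+1}`. -/
noncomputable def stepLoc (n : ℕ) : Bp K c I hmap n₀ h n →+* Bp K c I hmap n₀ h (n + 1) :=
  Localization.awayLift
    ((algebraMap (Qu K c I (n₀ + (n + 1))) (Bp K c I hmap n₀ h (n + 1))).comp
      (step K c I hmap (n₀ + n)))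
    (hImg K c I hmap n₀ h n)
    (by
      rw [RingHom.comp_apply, step_hImg]
      exact IsLocalization.map_units (Bp K c I hmap n₀ h (n + 1))
        ⟨hImg K c I hmap n₀ h (n + 1), Submonoid.mem_powers _⟩)

theorem stepLoc_alg (n : ℕ) (x : Qu K c I (n₀ + n)) :
    stepLoc K c I hmap n₀ h n (algebraMap _ _ x)
      = algebraMap (Qu K c I (n₀ + (n + 1))) _ (step K c I hmap (n₀ + n) x) := by
  unfold stepLoc Localization.awayLift
  rw [IsLocalization.Away.lift_eq]
  rfl

theorem structMap_alg (n : ℕ) (x : Qu K c I n₀) :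
    structMap K c I hmap n₀ h n (algebraMap _ _ x)
      = algebraMap _ _ (ind K c I hmap n₀ (n₀ + n) (Fin.castAdd n) (castAdd_inj n₀ n) x) := by
  exact IsLocalization.Away.lift_eq h
    (g := (algebraMap (Qu K c I (n₀ + n)) (Bp K c I hmap n₀ h n)).comp
      (ind K c I hmap n₀ (n₀ + n) (Fin.castAdd n) (castAdd_inj n₀ n)))
    (IsLocalization.map_units (Bp K c I hmap n₀ h n)
      ⟨hImg K c I hmap n₀ h n, Submonoid.mem_powers _⟩) x

theorem iotaLoc_alg (n : ℕ) (j : Fin n) (x : Qu K c I (n₀ + 1)) :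
    iotaLoc K c I hmap n₀ h n j (algebraMap _ _ x)
      = algebraMap _ _ (ind K c I hmap (n₀ + 1) (n₀ + n) (iotaJ n₀ n j) (iotaJ_inj n₀ n j) x) := by
  unfold iotaLoc Localization.awayLift
  rw [IsLocalization.Away.lift_eq]
  rfl

theorem stepLoc_structMap (n : ℕ) :
    (stepLoc K c I hmap n₀ h n).comp (structMap K c I hmap n₀ h n)
      = structMap K c I hmap n₀ h (n + 1) := by
  refine IsLocalization.ringHom_ext (Submonoid.powers h) (RingHom.ext fun x => ?_)
  simp only [RingHom.comp_apply, structMap_alg, stepLoc_alg]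
  congr 1
  exact step_castAdd K c I hmap n₀ n x

theorem stepLoc_iotaLoc (n : ℕ) (j : Fin n) :
    (stepLoc K c I hmap n₀ h n).comp (iotaLoc K c I hmap n₀ h n j)
      = iotaLoc K c I hmap n₀ h (n + 1) j.castSucc := by
  refine IsLocalization.ringHom_ext (Submonoid.powers (hImg K c I hmap n₀ h 1))
    (RingHom.ext fun x => ?_)
  simp only [RingHom.comp_apply, iotaLoc_alg, stepLoc_alg]
  congr 1
  refine ind_ind K c I hmap _ _ _ _ _ (iotaJ n₀ (n + 1) j.castSucc) _ _ _ ?_ x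
  funext i
  simp only [Function.comp_apply, iotaJ]
  split_ifs <;> rfl

theorem iotaLoc_structMap (n : ℕ) (j : Fin n) (x : Localization.Away h) :
    iotaLoc K c I hmap n₀ h n j (structMap K c I hmap n₀ h 1 x)
      = structMap K c I hmap n₀ h n x := by
  have : (iotaLoc K c I hmap n₀ h n j).comp (structMap K c I hmap n₀ h 1)
      = structMap K c I hmap n₀ h n := by
    refine IsLocalization.ringHom_ext (Submonoid.powers h) (RingHom.ext fun x => ?_)
    simp only [RingHom.comp_apply, structMap_alg, iotaLoc_alg]
    congr 1
    exact ind_ind K c I hmap _ _ _ _ _ (Fin.castAdd n) _ _ _ (iotaJ_comp_castAdd n₀ n j) x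
  exact RingHom.congr_fun this x

theorem structMap_inj
    (hinj : ∀ (m n : ℕ) (π : Fin m → Fin n) (hπ : Function.Injective π),
      Function.Injective (ind K c I hmap m n π hπ)) (n : ℕ) :
    Function.Injective (structMap K c I hmap n₀ h n) := by
  rw [injective_iff_map_eq_zero]
  intro x hx
  obtain ⟨a, s, rfl⟩ := IsLocalization.exists_mk'_eq (Submonoid.powers h) x
  have h1 : algebraMap (Qu K c I n₀) (Localization.Away h) a
      = IsLocalization.mk' _ a s * algebraMap _ _ (s : Qu K c I n₀) :=
    (IsLocalization.mk'_spec _ a s).symm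
  have h2 := congrArg (structMap K c I hmap n₀ h n) h1
  rw [map_mul, hx, zero_mul, structMap_alg] at h2
  obtain ⟨⟨_, k, rfl⟩, hk⟩ := (IsLocalization.map_eq_zero_iff
    (Submonoid.powers (hImg K c I hmap n₀ h n)) _ _).mp h2
  rw [IsLocalization.mk'_eq_zero_iff]
  refine ⟨⟨h ^ k, k, rfl⟩, hinj _ _ (Fin.castAdd n) (castAdd_inj n₀ n) ?_⟩
  rw [map_mul, map_zero]
  simpa [hImg] using hk

/-- Monomial in the `j`-th new column. -/
noncomputable def mon (n : ℕ) (j : Fin n) (u : Fin c →₀ ℕ) : Bp K c I hmap n₀ h n :=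
  algebraMap _ _ (colm K c I (n₀ + n) (Fin.natAdd n₀ j) u)

theorem iotaLoc_mon (n : ℕ) (j : Fin n) (i : Fin 1) (u : Fin c →₀ ℕ) :
    iotaLoc K c I hmap n₀ h n j (mon K c I hmap n₀ h 1 i u) = mon K c I hmap n₀ h n j u := by
  unfold mon
  rw [iotaLoc_alg, ind_colm]
  obtain rfl := Subsingleton.elim 0 i
  have e : (Fin.natAdd n₀ 0 : Fin (n₀ + 1)) = Fin.last n₀ := rfl
  rw [e, iotaJ_last]

theorem LI_step (o : MonomialOrder (Fin c))
    (hmax : ∀ (k : ℕ) (h' : Qu K c I (n₀ + k)),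
      hImg K c I hmap n₀ h k * h' ≠ 0 →
      Mset K c I hmap o (n₀ + k) (hImg K c I hmap n₀ h k * h') ⊆ Mset K c I hmap o n₀ h)
    (n : ℕ) :
    LI (stepLoc K c I hmap n₀ h n)
      (fun u : ↥((Mset K c I hmap o n₀ h)ᶜ) => mon K c I hmap n₀ h (n + 1) (Fin.last n) u) := by
  classical
  intro s l hs
  by_contra hcon
  push Not at hcon
  obtain ⟨i₀, hi₀, hl₀⟩ := hcon
  obtain ⟨u, hu, humax⟩ := Finset.exists_max_image (s.filter fun i => l i ≠ 0)
    (fun i => o.toSyn (i : Fin c →₀ ℕ)) ⟨i₀, by simp [hi₀, hl₀]⟩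
  rw [Finset.mem_filter] at hu
  obtain ⟨⟨_, q, rfl⟩, hb⟩ := IsLocalization.exist_integer_multiples
    (Submonoid.powers (hImg K c I hmap n₀ h n)) s l
  simp only [IsLocalization.IsInteger] at hb
  choose! a ha using hb
  have hs' : ∑ i ∈ s.filter (fun i => l i ≠ 0), stepLoc K c I hmap n₀ h n (l i) *
      mon K c I hmap n₀ h (n + 1) (Fin.last n) i = 0 := by
    rw [← hs, Finset.sum_filter]
    refine Finset.sum_congr rfl fun i _ => ?_
    split_ifs with h1
    · rfl
    · rw [not_not.mp h1]; simp
  have h1 : algebraMap (Qu K c I (n₀ + (n + 1))) (Bp K c I hmap n₀ h (n + 1))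
      (∑ i ∈ s.filter (fun i => l i ≠ 0), step K c I hmap (n₀ + n) (a i) *
        colm K c I (n₀ + (n + 1)) (Fin.last (n₀ + n)) i) = 0 := by
    have := congrArg (fun x => stepLoc K c I hmap n₀ h n
      (algebraMap _ _ (hImg K c I hmap n₀ h n ^ q)) * x) hs'
    simp only [mul_zero, Finset.mul_sum] at this
    rw [← this, map_sum]
    refine Finset.sum_congr rfl fun i hi => ?_
    rw [map_mul, ← stepLoc_alg, ha i (Finset.mem_filter.mp hi).1, Algebra.smul_def, map_mul,
      mul_assoc]
    rfl
  obtain ⟨⟨_, k, rfl⟩, hk⟩ := (IsLocalization.map_eq_zero_iff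
    (Submonoid.powers (hImg K c I hmap n₀ h (n + 1))) _ _).mp h1
  simp only at hk
  refine u.2 (hmax n (hImg K c I hmap n₀ h n ^ k * a u) ?_ ?_)
  · intro h0
    apply hu.2
    have h3 := ha u hu.1
    have hun : ∀ k : ℕ, IsUnit (algebraMap (Qu K c I (n₀ + n)) (Bp K c I hmap n₀ h n)
        (hImg K c I hmap n₀ h n ^ k)) := fun k =>
      IsLocalization.map_units _ (⟨_, k, rfl⟩ : Submonoid.powers (hImg K c I hmap n₀ h n))
    have h4 := congrArg (algebraMap (Qu K c I (n₀ + n)) (Bp K c I hmap n₀ h n)) h0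
    rw [← mul_assoc, ← pow_succ', map_mul, map_zero, (hun _).mul_right_eq_zero, h3,
      Algebra.smul_def] at h4
    exact (hun q).mul_right_eq_zero.mp h4
  · refine ⟨((s.filter fun i => l i ≠ 0).erase u).map (Function.Embedding.subtype _),
      fun v => if hv : v ∈ (Mset K c I hmap o n₀ h)ᶜ then
        - (hImg K c I hmap n₀ h n * (hImg K c I hmap n₀ h n ^ k * a ⟨v, hv⟩)) else 0, ?_, ?_⟩
    · intro v hv
      obtain ⟨v', hv', rfl⟩ := Finset.mem_map.mp hv
      rw [Finset.mem_erase] at hv'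
      refine lt_of_le_of_ne (humax _ hv'.2) fun he => hv'.1 ?_
      exact Subtype.ext (o.toSyn.injective he)
    · rw [Finset.sum_map]
      rw [← Finset.add_sum_erase _ _ (Finset.mem_filter.mpr hu)] at hk
      have hk' := congrArg (fun x => hImg K c I hmap n₀ h (n + 1) * x) hk
      simp only [mul_add, mul_zero, Finset.mul_sum, ← step_hImg] at hk'
      rw [add_eq_zero_iff_eq_neg, ← Finset.sum_neg_distrib] at hk'
      refine Eq.trans ?_ (hk'.trans (Finset.sum_congr rfl fun v _ => ?_))
      · simp only [map_mul, map_pow]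
        simp only [mul_assoc]
        rfl
      · have hv : (Function.Embedding.subtype (· ∈ (Mset K c I hmap o n₀ h)ᶜ) v)
            ∈ (Mset K c I hmap o n₀ h)ᶜ := v.2
        beta_reduce
        rw [dif_pos hv]
        simp only [map_mul, map_pow, map_neg, neg_mul]
        simp only [mul_assoc]
        rfl

theorem LI_prod (o : MonomialOrder (Fin c))
    (hinj : ∀ (m n : ℕ) (π : Fin m → Fin n) (hπ : Function.Injective π),
      Function.Injective (ind K c I hmap m n π hπ))
    (hmax : ∀ (k : ℕ) (h' : Qu K c I (n₀ + k)),
      hImg K c I hmap n₀ h k * h' ≠ 0 →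
      Mset K c I hmap o (n₀ + k) (hImg K c I hmap n₀ h k * h') ⊆ Mset K c I hmap o n₀ h)
    (n : ℕ) :
    LI (structMap K c I hmap n₀ h n)
      (fun f : Fin n → ↥((Mset K c I hmap o n₀ h)ᶜ) =>
        ∏ j, mon K c I hmap n₀ h n j (f j)) := by
  induction n with
  | zero =>
    intro s l hs i hi
    apply structMap_inj K c I hmap n₀ h hinj 0
    have : s = {i} := Finset.eq_singleton_iff_unique_mem.mpr
      ⟨hi, fun _ _ => Subsingleton.elim _ _⟩
    subst this
    simpa using hs
  | succ n ih =>
    have ht := ih.tower (LI_step K c I hmap n₀ h o hmax n)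
    rw [stepLoc_structMap] at ht
    intro s l hs i hi
    let e : (Fin (n + 1) → ↥((Mset K c I hmap o n₀ h)ᶜ)) ≃
        (Fin n → ↥((Mset K c I hmap o n₀ h)ᶜ)) × ↥((Mset K c I hmap o n₀ h)ᶜ) :=
      { toFun := fun f => (fun j => f j.castSucc, f (Fin.last n))
        invFun := fun p => Fin.snoc p.1 p.2
        left_inv := fun f => by
          funext j
          refine Fin.lastCases ?_ (fun j => ?_) j <;> simp
        right_inv := fun p => by simp }
    have := ht (s.map e.toEmbedding) (fun p => l (e.symm p)) ?_ (e i)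
      (by simpa using hi)
    · simpa using this
    · rw [Finset.sum_map, ← hs]
      refine Finset.sum_congr rfl fun f _ => ?_
      simp only [Equiv.coe_toEmbedding, Equiv.symm_apply_apply, Fin.prod_univ_castSucc, map_prod]
      congr 2
      refine Finset.prod_congr rfl fun j _ => ?_
      rw [← iotaLoc_mon K c I hmap n₀ h n j 0, ← iotaLoc_mon K c I hmap n₀ h (n + 1) _ 0,
        ← stepLoc_iotaLoc]
      rfl

/-- The quotient map onto `Qu`. -/
noncomputable def qmk (m : ℕ) : MvPolynomial (Fin c × Fin m) K →+* Qu K c I m :=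
  Ideal.Quotient.mk (I m)

theorem subring_top (n : ℕ) (T : Subring (Bp K c I hmap n₀ h n))
    (h1 : ∀ r, structMap K c I hmap n₀ h n r ∈ T)
    (h2 : ∀ j i, mon K c I hmap n₀ h n j (Finsupp.single i 1) ∈ T) (x) : x ∈ T := by
  have hp : ∀ p : MvPolynomial (Fin c × Fin (n₀ + n)) K,
      algebraMap (Qu K c I (n₀ + n)) (Bp K c I hmap n₀ h n) (qmk K c I (n₀ + n) p)
        ∈ T := by
    intro p
    have hind : ∀ q : MvPolynomial (Fin c × Fin n₀) K,
        algebraMap (Qu K c I (n₀ + n)) (Bp K c I hmap n₀ h n) (qmk K c I (n₀ + n)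
          (rename (Prod.map (id : Fin c → Fin c) (Fin.castAdd n)) q)) ∈ T := by
      intro q
      have := h1 (algebraMap (Qu K c I n₀) _ (qmk K c I n₀ q))
      rw [structMap_alg] at this
      exact this
    induction p using MvPolynomial.induction_on with
    | C r => simpa using hind (C r)
    | add p q hp hq =>
      have := T.add_mem hp hq
      rw [← map_add, ← map_add] at this
      exact this
    | mul_X p ij hp =>
      have hX : algebraMap (Qu K c I (n₀ + n)) (Bp K c I hmap n₀ h n)
          (qmk K c I (n₀ + n) (X ij)) ∈ T := by
        obtain ⟨i, j⟩ := ij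
        induction j using Fin.addCases with
        | left j => simpa using hind (X (i, j))
        | right j =>
          have := h2 j i
          unfold mon colm at this
          have e : (∏ i', X (i', Fin.natAdd n₀ j) ^ ((Finsupp.single i 1 : Fin c →₀ ℕ) i') :
              MvPolynomial (Fin c × Fin (n₀ + n)) K) = X (i, Fin.natAdd n₀ j) := by
            classical
            rw [Finset.prod_eq_single i]
            · simp
            · intro b _ hb
              simp [hb.symm]
            · simp
          rw [e] at this
          exact this
      have := T.mul_mem hp hX
      rw [← map_mul, ← map_mul] at this
      exact this
  obtain ⟨a, ⟨_, k, rfl⟩, rfl⟩ :=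
    IsLocalization.exists_mk'_eq (Submonoid.powers (hImg K c I hmap n₀ h n)) x
  obtain ⟨p, rfl⟩ : ∃ p, qmk K c I (n₀ + n) p = a :=
    Ideal.Quotient.mk_surjective (I := I (n₀ + n)) a
  have e : IsLocalization.mk' (Bp K c I hmap n₀ h n) (qmk K c I (n₀ + n) p)
      (⟨_, k, rfl⟩ : Submonoid.powers (hImg K c I hmap n₀ h n))
      = algebraMap (Qu K c I (n₀ + n)) (Bp K c I hmap n₀ h n) (qmk K c I (n₀ + n) p)
        * structMap K c I hmap n₀ h n
          (IsLocalization.mk' (Localization.Away h) 1 (⟨_, k, rfl⟩ : Submonoid.powers h)) := by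
    rw [IsLocalization.mk'_eq_iff_eq_mul, mul_assoc]
    have e2 : algebraMap (Qu K c I (n₀ + n)) (Bp K c I hmap n₀ h n) (hImg K c I hmap n₀ h n ^ k)
        = structMap K c I hmap n₀ h n (algebraMap _ _ (h ^ k)) := by
      rw [structMap_alg, map_pow (ind K c I hmap _ _ _ _)]
      rfl
    have e3 : IsLocalization.mk' (Localization.Away h) 1 (⟨_, k, rfl⟩ : Submonoid.powers h)
        * algebraMap (Qu K c I n₀) (Localization.Away h) (h ^ k) = 1 := by
      rw [← map_one (algebraMap (Qu K c I n₀) (Localization.Away h))]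
      exact IsLocalization.mk'_spec _ _ (⟨_, k, rfl⟩ : Submonoid.powers h)
    simp only
    rw [e2, ← map_mul, e3, map_one, mul_one]
  rw [e]
  exact T.mul_mem (hp p) (h1 _)

theorem span_top (o : MonomialOrder (Fin c)) :
    letI : Algebra (Localization.Away h) (Bp K c I hmap n₀ h 1) :=
          (structMap K c I hmap n₀ h 1).toAlgebra
    Submodule.span (Localization.Away h)
      (Set.range fun u : ↥((Mset K c I hmap o n₀ h)ᶜ) => mon K c I hmap n₀ h 1 0 u) = ⊤ := by
  letI : Algebra (Localization.Away h) (Bp K c I hmap n₀ h 1) :=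
          (structMap K c I hmap n₀ h 1).toAlgebra
  let g : Multiplicative (Fin c →₀ ℕ) →* Bp K c I hmap n₀ h 1 :=
    { toFun := fun u => mon K c I hmap n₀ h 1 0 u.toAdd
      map_one' := by
        unfold mon colm
        simp only [toAdd_one, Finsupp.coe_zero, Pi.zero_apply, pow_zero, Finset.prod_const_one]
        exact (congrArg _ (map_one (Ideal.Quotient.mk _))).trans (map_one _)
      map_mul' := fun u v => by
        unfold mon
        rw [toAdd_mul, colm_add, map_mul] }
  have hadj : Algebra.adjoin (Localization.Away h) (MonoidHom.mrange g : Set (Bp K c I hmap n₀ h 1)) = ⊤ := by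
    rw [eq_top_iff]
    rintro x -
    refine subring_top K c I hmap n₀ h 1
      (Algebra.adjoin (Localization.Away h) (MonoidHom.mrange g : Set (Bp K c I hmap n₀ h 1))).toSubring ?_ ?_ x
    · intro r
      exact (Algebra.adjoin (Localization.Away h) (MonoidHom.mrange g : Set (Bp K c I hmap n₀ h 1))).algebraMap_mem r
    · intro j i
      obtain rfl := Subsingleton.elim 0 j
      exact Algebra.subset_adjoin ⟨Multiplicative.ofAdd (Finsupp.single i 1), rfl⟩
  have hspan : Submodule.span (Localization.Away h) (MonoidHom.mrange g : Set (Bp K c I hmap n₀ h 1)) = ⊤ := by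
    have := Algebra.adjoin_eq_span (Localization.Away h) (MonoidHom.mrange g : Set (Bp K c I hmap n₀ h 1))
    rw [hadj, Submonoid.closure_eq] at this
    rw [← this]; rfl
  rw [eq_top_iff, ← hspan, Submodule.span_le]
  rintro _ ⟨u, rfl⟩
  change mon K c I hmap n₀ h 1 0 u.toAdd ∈ Submodule.span _ _
  generalize u.toAdd = u
  have hwf : WellFounded (fun u v : Fin c →₀ ℕ => o.toSyn u < o.toSyn v) :=
    InvImage.wf o.toSyn wellFounded_lt
  induction u using hwf.induction with
  | _ u ih =>
  by_cases hu : u ∈ Mset K c I hmap o n₀ h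
  · obtain ⟨s, l, hs, he⟩ := hu
    have hun : IsUnit (algebraMap (Qu K c I n₀) (Localization.Away h) h) :=
      IsLocalization.map_units _ (⟨h, Submonoid.mem_powers _⟩ : Submonoid.powers h)
    have he' := congrArg (algebraMap (Qu K c I (n₀ + 1)) (Bp K c I hmap n₀ h 1)) he
    rw [map_sum] at he'
    have key : ∀ b v, algebraMap (Qu K c I (n₀ + 1)) (Bp K c I hmap n₀ h 1)
        (step K c I hmap n₀ b * colm K c I (n₀ + 1) (Fin.last n₀) v)
        = algebraMap (Qu K c I n₀) (Localization.Away h) b • mon K c I hmap n₀ h 1 0 v := by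
      intro b v
      rw [Algebra.smul_def, RingHom.algebraMap_toAlgebra, structMap_alg, map_mul]
      rfl
    simp only [key] at he'
    rw [← Submodule.smul_mem_iff_of_isUnit _ hun, he']
    exact Submodule.sum_mem _ fun v hv => Submodule.smul_mem _ _ (ih v (hs v hv))
  · exact Submodule.subset_span ⟨⟨u, hu⟩, rfl⟩

end WideMatrixShift

open WideMatrixShift in
set_option synthInstance.maxHeartbeats 1000000 in
set_option maxHeartbeats 1000000 in
/-- **The Shift Theorem.**  Let `(I n)` be a symmetric wide-matrix ideal chain over a
Noetherian ring `K` such that all `I n` are radical, all induced maps between the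
quotients `A_n/I_n` are injective, and `I 0 ≠ A_0`.  Then there are `n₀ ∈ ℕ` and a
nonzero `h ∈ A_{n₀}/I_{n₀}` such that, with `B'_n := (A_{n₀+n}/I_{n₀+n})[1/h]`, for every
`n ≥ 1` the natural `B'_0`-algebra homomorphism from the `n`-fold tensor product
`B'_1 ⊗_{B'_0} ⋯ ⊗_{B'_0} B'_1` to `B'_n`, whose `j`-th tensor factor maps via `ι_j`, is
an isomorphism. -/
theorem shift_theorem
    (K : Type) [CommRing K] [IsNoetherianRing K] (c : ℕ)
    (I : ∀ n : ℕ, Ideal (MvPolynomial (Fin c × Fin n) K))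
    (hsym : ∀ (n : ℕ) (π : Equiv.Perm (Fin n)),
      Ideal.map (MvPolynomial.rename (Prod.map (id : Fin c → Fin c) π)) (I n) = I n)
    (hincl : ∀ n : ℕ,
      Ideal.map (MvPolynomial.rename
          (Prod.map (id : Fin c → Fin c) (Fin.castSucc : Fin n → Fin (n + 1))))
        (I n) ≤ I (n + 1))
    (hmap : ChainMap K c I)
    (hrad : ∀ n : ℕ, (I n).IsRadical)
    (hinj : ∀ (m n : ℕ) (π : Fin m → Fin n) (hπ : Function.Injective π),
      Function.Injective (ind K c I hmap m n π hπ))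
    (hne : I 0 ≠ ⊤) :
    ∃ (n₀ : ℕ) (h : Qu K c I n₀), h ≠ 0 ∧
      ∀ n : ℕ, 1 ≤ n →
        letI : Algebra (Localization.Away h) (Bp K c I hmap n₀ h 1) :=
          (structMap K c I hmap n₀ h 1).toAlgebra
        letI : Algebra (Localization.Away h) (Bp K c I hmap n₀ h n) :=
          (structMap K c I hmap n₀ h n).toAlgebra
        ∃ Φ : (⨂[Localization.Away h] _ : Fin n, Bp K c I hmap n₀ h 1)
            →ₐ[Localization.Away h] Bp K c I hmap n₀ h n,
          (∀ x : Fin n → Bp K c I hmap n₀ h 1,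
            Φ (PiTensorProduct.tprod (Localization.Away h) x)
              = ∏ j : Fin n, iotaLoc K c I hmap n₀ h n j (x j)) ∧
          Function.Bijective Φ := by
  classical
  let o : MonomialOrder (Fin c) := MonomialOrder.lex
  obtain ⟨n₀, h, hh, hmax⟩ := exists_max K c I hmap o hne
  refine ⟨n₀, h, hh, fun n hn => ?_⟩
  letI a1 : Algebra (Localization.Away h) (Bp K c I hmap n₀ h 1) :=
    (structMap K c I hmap n₀ h 1).toAlgebra
  letI an : Algebra (Localization.Away h) (Bp K c I hmap n₀ h n) :=
    (structMap K c I hmap n₀ h n).toAlgebra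
  let ι : ∀ j : Fin n, Bp K c I hmap n₀ h 1 →ₐ[Localization.Away h] Bp K c I hmap n₀ h n :=
    fun j => { iotaLoc K c I hmap n₀ h n j with
      commutes' := iotaLoc_structMap K c I hmap n₀ h n j }
  let F : MultilinearMap (Localization.Away h) (fun _ : Fin n => Bp K c I hmap n₀ h 1)
      (Bp K c I hmap n₀ h n) :=
    (MultilinearMap.mkPiAlgebra (Localization.Away h) (Fin n)
      (Bp K c I hmap n₀ h n)).compLinearMap (fun j => (ι j).toLinearMap)
  have hF : ∀ x, F x = ∏ j, iotaLoc K c I hmap n₀ h n j (x j) := fun x => rfl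
  let Φ : (⨂[Localization.Away h] _ : Fin n, Bp K c I hmap n₀ h 1)
            →ₐ[Localization.Away h] Bp K c I hmap n₀ h n :=
    PiTensorProduct.liftAlgHom F (by simp [hF])
      (fun x y => by simp only [hF, Pi.mul_apply, map_mul, Finset.prod_mul_distrib])
  have hΦ : ∀ x : Fin n → Bp K c I hmap n₀ h 1,
      Φ (PiTensorProduct.tprod (Localization.Away h) x)
        = ∏ j : Fin n, iotaLoc K c I hmap n₀ h n j (x j) := fun x =>
    (PiTensorProduct.lift.tprod (φ := F) x).trans (hF x)
  refine ⟨Φ, hΦ, ?_, ?_⟩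
  · have hli1 : LinearIndependent (Localization.Away h)
        (fun u : ↥((Mset K c I hmap o n₀ h)ᶜ) => mon K c I hmap n₀ h 1 0 u) := by
      have h1 : LinearIndependent (Localization.Away h)
          (fun f : Fin 1 → ↥((Mset K c I hmap o n₀ h)ᶜ) =>
            ∏ j, mon K c I hmap n₀ h 1 j (f j)) :=
        linearIndependent_iff'.mpr fun s l hs =>
          LI_prod K c I hmap n₀ h o hinj hmax 1 s l hs
      have h2 := h1.comp (fun u _ => u) (fun u v huv => congrFun huv 0)
      convert h2 using 2 with u
      simp
    have hlin : LinearIndependent (Localization.Away h)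
        (fun f : Fin n → ↥((Mset K c I hmap o n₀ h)ᶜ) =>
          ∏ j, mon K c I hmap n₀ h n j (f j)) :=
      linearIndependent_iff'.mpr fun s l hs =>
        LI_prod K c I hmap n₀ h o hinj hmax n s l hs
    let b : Module.Basis ↥((Mset K c I hmap o n₀ h)ᶜ) (Localization.Away h)
        (Bp K c I hmap n₀ h 1) :=
      Module.Basis.mk hli1 (span_top K c I hmap n₀ h o).ge
    let B := Basis.piTensorProduct (fun _ : Fin n => b)
    have hB : Φ.toLinearMap ∘ B = (fun f : Fin n → ↥((Mset K c I hmap o n₀ h)ᶜ) =>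
          ∏ j, mon K c I hmap n₀ h n j (f j)) := by
      funext f
      simp only [Function.comp_apply, B, Basis.piTensorProduct_apply]
      refine (hΦ _).trans (Finset.prod_congr rfl fun j _ => ?_)
      rw [Module.Basis.mk_apply]
      exact iotaLoc_mon K c I hmap n₀ h n j 0 _
    rw [← hB] at hlin
    change Function.Injective Φ.toLinearMap
    rw [injective_iff_map_eq_zero]
    intro x hx
    rw [← B.linearCombination_repr x, Finsupp.apply_linearCombination] at hx
    have := linearIndependent_iff.mp hlin _ hx
    simpa using this
  · intro x
    refine subring_top K c I hmap n₀ h n Φ.range.toSubring ?_ ?_ x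
    · intro r
      exact Φ.range.algebraMap_mem r
    · intro j i
      refine ⟨PiTensorProduct.tprod (Localization.Away h)
        (Function.update 1 j (mon K c I hmap n₀ h 1 0 (Finsupp.single i 1))), ?_⟩
      refine (hΦ _).trans ?_
      rw [Finset.prod_eq_single j]
      · rw [Function.update_self, iotaLoc_mon]
      · intro k _ hk
        rw [Function.update_of_ne hk, Pi.one_apply, map_one]
      · simp
end
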